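/- arXiv:2305.12919 — 2 statements merged into one kernel-verified Lean document; each statement's English description precedes it below -/
import Mathlib

section
/- Let P be a compact packing of the Euclidean plane by disks whose radii take finitely many values, with at least two distinct radii occurring, and let r_min and r_max denote the smallest and largest radii used. Then r_min / r_max ≤ 2√2/√(5 − √5) − 1. -/
open Metric Set

noncomputable section

/-- The Euclidean plane. -/
abbrev Plane : Type := EuclideanSpace ℝ (Fin 2)

/-- A closed disk in the plane, given by its center and (positive) radius. -/
structure Disk where
  center : Plane
  radius : ℝ
  radius_pos : 0 < radius

/-- The set of points of a disk (a closed ball). -/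
def Disk.set (d : Disk) : Set Plane := closedBall d.center d.radius

/-- A packing: a family of closed disks with pairwise disjoint interiors. -/
def IsPacking (P : Set Disk) : Prop :=
  ∀ d ∈ P, ∀ d' ∈ P, d ≠ d' → Disjoint (interior d.set) (interior d'.set)

/-- Two disks are (externally) tangent: they intersect in exactly one point. -/
def Disk.Tangent (d d' : Disk) : Prop :=
  dist d.center d'.center = d.radius + d'.radius

/-- The union of the disks of a packing. -/
def packingUnion (P : Set Disk) : Set Plane := ⋃ d ∈ P, d.set

/-- A packing is compact (triangulated) if every connected component of the
complement of the union of the disks is bounded and its closure meets exactly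
three of the disks, these three disks being pairwise tangent. -/
def IsCompactPacking (P : Set Disk) : Prop :=
  IsPacking P ∧
  ∀ x ∈ (packingUnion P)ᶜ,
    Bornology.IsBounded (connectedComponentIn (packingUnion P)ᶜ x) ∧
    ∃ d₁ d₂ d₃ : Disk, d₁ ∈ P ∧ d₂ ∈ P ∧ d₃ ∈ P ∧
      d₁ ≠ d₂ ∧ d₁ ≠ d₃ ∧ d₂ ≠ d₃ ∧
      d₁.Tangent d₂ ∧ d₁.Tangent d₃ ∧ d₂.Tangent d₃ ∧
      {d ∈ P | (closure (connectedComponentIn (packingUnion P)ᶜ x) ∩ d.set).Nonempty}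
        = {d₁, d₂, d₃}

/-- A packing uses the radius `r` if one of its disks has radius `r`. -/
def UsesRadius (P : Set Disk) (r : ℝ) : Prop := ∃ d ∈ P, d.radius = r

/-- All radii of the disks of `P` belong to `S`. -/
def RadiiIn (P : Set Disk) (S : Set ℝ) : Prop := ∀ d ∈ P, d.radius ∈ S

/-- The square `[-r, r]²`. -/
def square (r : ℝ) : Set Plane := {x | |x 0| ≤ r ∧ |x 1| ≤ r}

/-- The density of a packing: the limsup, as `r → ∞`, of the proportion of the
square `[-r, r]²` covered by the disks. -/
def density (P : Set Disk) : ℝ :=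
  Filter.limsup
    (fun r : ℝ => (MeasureTheory.volume (packingUnion P ∩ square r)).toReal / (4 * r ^ 2))
    Filter.atTop

end

/-!
Every hole of a compact packing lies in the triangle spanned by the centers of its three bordering
disks. Hence the neighbors of a disk `D` of minimal radius `r` cut the directions around `D` into
sectors between mutually tangent neighbors. If neighbors of radii `a` and `b` are tangent, the angle
`α` between them satisfies `sin² (α / 2) = a / (r + a) * (b / (r + b))`, and `≥` holds without the
tangency. Since radii lie in `[r, M]`, this is at least `1 / 4`, so `α ≥ π / 3`, and strictly so if
one of the neighbors is larger than `D`; for tangent neighbors it is at most `(M / (r + M))²`.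

Choose `D` tangent to a larger disk. If `M / (r + M) < sin (π / 5)`, successive neighbors are less
than `2π / 5` apart, so five steps turn by less than `2π`; but starting from the larger neighbor
they turn by more than `5π / 3`, which leaves a gap shorter than `π / 3`. So
`r / M ≤ 1 / sin (π / 5) - 1`, which is the stated bound. The radius of the disks being bounded
below makes the packing locally finite; this provides both the sectors and a disk of minimal radius
tangent to a larger one.
-/

section Topology

variable {X : Type*} [TopologicalSpace X]

theorem closure_connectedComponentIn_inter_subset (F : Set X) (x : X) :
    closure (connectedComponentIn F x) ∩ F ⊆ connectedComponentIn F x := by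
  by_cases hx : x ∈ F
  · have hsub := connectedComponentIn_subset F x
    exact (isPreconnected_connectedComponentIn.subset_closure (subset_inter subset_closure hsub)
      inter_subset_left).subset_connectedComponentIn
        ⟨subset_closure (mem_connectedComponentIn hx), hx⟩ inter_subset_right
  · simp [connectedComponentIn_eq_empty hx]

variable {γ : ℝ → X}

theorem image_Icc_subset_closure_connectedComponentIn (hγ : Continuous γ) {F : Set X} {s t u : ℝ}
    (hu : u ∈ Ioo s t) (hF : γ '' Ioo s t ⊆ F) :
    γ '' Icc s t ⊆ closure (connectedComponentIn F (γ u)) := by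
  have hsub : γ '' Ioo s t ⊆ connectedComponentIn F (γ u) :=
    (isPreconnected_Ioo.image γ hγ.continuousOn).subset_connectedComponentIn
      (mem_image_of_mem γ hu) hF
  rw [← closure_Ioo (hu.1.trans hu.2).ne]
  exact (image_closure_subset_closure_image hγ).trans (closure_mono hsub)

theorem exists_le_image_Ioo_subset_compl_union (hγ : Continuous γ) {A B : Set X}
    (hA : IsClosed A) (hB : IsClosed B) {a b : ℝ} (hab : a ≤ b) (ha : γ a ∈ A) (hb : γ b ∈ B) :
    ∃ s t, s ≤ t ∧ γ s ∈ A ∧ γ t ∈ B ∧ γ '' Ioo s t ⊆ (A ∪ B)ᶜ := by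
  obtain ⟨t, ⟨⟨hat, htb⟩, ht⟩, htmin⟩ :=
    (isCompact_Icc.inter_right (hB.preimage hγ)).exists_isLeast ⟨b, right_mem_Icc.2 hab, hb⟩
  obtain ⟨s, ⟨⟨has, hst⟩, hs⟩, hsmax⟩ :=
    (isCompact_Icc.inter_right (hA.preimage hγ)).exists_isGreatest ⟨a, left_mem_Icc.2 hat, ha⟩
  refine ⟨s, t, hst, hs, ht, ?_⟩
  rintro _ ⟨v, ⟨hsv, hvt⟩, rfl⟩ (hv | hv)
  · exact hsv.not_ge (hsmax ⟨⟨has.trans hsv.le, hvt.le⟩, hv⟩)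
  · exact hvt.not_ge (htmin ⟨⟨has.trans hsv.le, hvt.le.trans htb⟩, hv⟩)

end Topology

section MetricGeometry

theorem finite_of_pairwise_le_dist_of_mem_isCompact {ι X : Type*} [MetricSpace X] {f : ι → X}
    {ε : ℝ} (hε : 0 < ε) (hf : Pairwise fun i j ↦ ε ≤ dist (f i) (f j)) {K : Set X}
    (hK : IsCompact K) (hfK : ∀ i, f i ∈ K) : Finite ι := by
  let _ : TopologicalSpace ι := ⊥
  have : DiscreteTopology ι := ⟨rfl⟩
  have hpre := (isClosedEmbedding_of_pairwise_le_dist hε hf).isCompact_preimage hK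
  rw [eq_univ_of_forall (s := f ⁻¹' K) hfK] at hpre
  exact finite_univ_iff.1 hpre.finite_of_discrete

theorem exists_mem_closedBall_subset_closedBall {E : Type*} [SeminormedAddCommGroup E]
    [NormedSpace ℝ E] {x c : E} {r s : ℝ} (hr : 0 < r) (hrs : r ≤ s) (hx : x ∈ closedBall c s) :
    ∃ y, x ∈ closedBall y r ∧ closedBall y r ⊆ closedBall c s := by
  have hs : 0 < s := hr.trans_le hrs
  have hratio : 0 ≤ 1 - r / s := sub_nonneg.2 ((div_le_one hs).2 hrs)
  refine ⟨AffineMap.lineMap x c (r / s), ?_, closedBall_subset_closedBall' ?_⟩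
  · rw [mem_closedBall, dist_left_lineMap, Real.norm_of_nonneg (by positivity)]
    calc r / s * dist x c ≤ r / s * s := by gcongr; exact hx
      _ = r := div_mul_cancel₀ r hs.ne'
  · rw [dist_lineMap_right, Real.norm_of_nonneg hratio]
    calc r + (1 - r / s) * dist x c ≤ r + (1 - r / s) * s := by gcongr; exact hx
      _ = s := by field_simp; ring

theorem exists_ne_zero_forall_dist_le_dist_add_smul {E : Type*} [NormedAddCommGroup E]
    [InnerProductSpace ℝ E] {T : Set E} (hTne : T.Nonempty) (hTcomplete : IsComplete T)
    (hTconvex : Convex ℝ T) {y : E} (hy : y ∉ T) :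
    ∃ w : E, w ≠ 0 ∧ ∀ t : ℝ, 0 ≤ t → ∀ c ∈ T, dist y c ≤ dist (y + t • w) c := by
  obtain ⟨v, hvT, hv⟩ := exists_norm_eq_iInf_of_complete_convex hTne hTcomplete hTconvex y
  rw [norm_eq_iInf_iff_real_inner_le_zero hTconvex hvT] at hv
  refine ⟨y - v, sub_ne_zero.2 fun h ↦ hy (h ▸ hvT), fun t ht c hc ↦ ?_⟩
  have hinner : 0 ≤ inner ℝ (y - c) (y - v) := by
    have hsplit : y - c = (y - v) - (c - v) := by abel
    rw [hsplit, inner_sub_left, real_inner_comm (y - v) (c - v)]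
    linarith [hv c hc, real_inner_self_nonneg (x := y - v)]
  rw [dist_eq_norm, dist_eq_norm, add_sub_right_comm]
  refine le_of_sq_le_sq ?_ (norm_nonneg _)
  rw [norm_add_sq_real, inner_smul_right]
  linarith [mul_nonneg ht hinner, sq_nonneg ‖t • (y - v)‖]

theorem not_isBounded_image_add_smul_Ici {E : Type*} [NormedAddCommGroup E] [NormedSpace ℝ E]
    (y : E) {w : E} (hw : w ≠ 0) :
    ¬ Bornology.IsBounded ((fun t : ℝ ↦ y + t • w) '' Ici 0) := by
  intro hbdd
  obtain ⟨R, hR⟩ := hbdd.subset_closedBall y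
  have hw' : 0 < ‖w‖ := norm_pos_iff.2 hw
  have hmem := hR (mem_image_of_mem _ (mem_Ici.2 (by positivity : 0 ≤ (|R| + 1) / ‖w‖)))
  rw [mem_closedBall, dist_self_add_left, norm_smul, Real.norm_of_nonneg (by positivity),
    div_mul_cancel₀ _ hw'.ne'] at hmem
  linarith [le_abs_self R]

theorem exists_nonneg_of_mem_convexHull_triple {E : Type*} [AddCommGroup E] [Module ℝ E]
    {c v w x : E} (hx : x ∈ convexHull ℝ {c, c + v, c + w}) :
    ∃ A B : ℝ, 0 ≤ A ∧ 0 ≤ B ∧ x = c + (A • v + B • w) := by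
  rw [convexHull_insert (by simp), convexHull_pair, mem_convexJoin] at hx
  obtain ⟨_, rfl, _, ⟨s, t, hs, ht, hst, rfl⟩, p, q, -, hq, hpq, rfl⟩ := hx
  refine ⟨q * s, q * t, mul_nonneg hq hs, mul_nonneg hq ht, ?_⟩
  obtain rfl : s = 1 - t := by linarith
  obtain rfl : p = 1 - q := by linarith
  module

end MetricGeometry

namespace Disk

variable {D E : Disk}

theorem Tangent.symm (h : D.Tangent E) : E.Tangent D := by
  rw [Tangent, dist_comm, add_comm]
  exact h

theorem center_mem_set (D : Disk) : D.center ∈ D.set :=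
  mem_closedBall_self D.radius_pos.le

end Disk

section Packing

variable {P Q : Set Disk} {D E : Disk}

theorem mem_packingUnion {x : Plane} : x ∈ packingUnion P ↔ ∃ d ∈ P, x ∈ d.set := by
  simp [packingUnion]

theorem Disk.set_subset_packingUnion (hD : D ∈ P) : D.set ⊆ packingUnion P :=
  subset_biUnion_of_mem (u := Disk.set) hD

theorem packingUnion_union (P Q : Set Disk) :
    packingUnion (P ∪ Q) = packingUnion P ∪ packingUnion Q :=
  biUnion_union P Q Disk.set

theorem IsPacking.radius_add_radius_le_dist (hP : IsPacking P) (hD : D ∈ P) (hE : E ∈ P)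
    (hne : D ≠ E) : D.radius + E.radius ≤ dist D.center E.center := by
  have h := hP D hD E hE hne
  rwa [Disk.set, Disk.set, interior_closedBall _ D.radius_pos.ne',
    interior_closedBall _ E.radius_pos.ne', disjoint_ball_ball_iff D.radius_pos E.radius_pos] at h

-- Near `x`, each disk is replaced by a disk of radius `m` inside it; these are `2m`-separated.
theorem IsPacking.locallyFinite (hP : IsPacking P) {m : ℝ} (hm : 0 < m)
    (hle : ∀ d ∈ P, m ≤ d.radius) : LocallyFinite fun d : P ↦ d.1.set := by
  intro x
  refine ⟨closedBall x 1, closedBall_mem_nhds x one_pos, ?_⟩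
  have hshrink (d : {d : P | (d.1.set ∩ closedBall x 1).Nonempty}) :
      ∃ c ∈ closedBall x (m + 1), closedBall c m ⊆ d.1.1.set := by
    obtain ⟨d, z, hzd, hzx⟩ := d
    obtain ⟨c, hzc, hc⟩ := exists_mem_closedBall_subset_closedBall hm (hle d d.2) hzd
    exact ⟨c, (dist_triangle_left c x z).trans (add_le_add hzc hzx), hc⟩
  choose c hcx hc using hshrink
  refine finite_of_pairwise_le_dist_of_mem_isCompact (add_pos hm hm) (fun d e hde ↦ ?_)
    (isCompact_closedBall x (m + 1)) hcx
  have hdisj := hP d.1 d.1.2 e.1 e.1.2 fun h ↦ hde (Subtype.ext (Subtype.ext h))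
  refine (disjoint_ball_ball_iff hm hm).1 ?_
  exact hdisj.mono (interior_maximal (ball_subset_closedBall.trans (hc d)) isOpen_ball)
    (interior_maximal (ball_subset_closedBall.trans (hc e)) isOpen_ball)

theorem isClosed_packingUnion (hP : LocallyFinite fun d : P ↦ d.1.set) (hQ : Q ⊆ P) :
    IsClosed (packingUnion Q) := by
  rw [packingUnion, biUnion_eq_iUnion]
  exact (hP.comp_injective (inclusion_injective hQ)).isClosed_iUnion fun _ ↦ isClosed_closedBall

end Packing

section Holes

variable {P Q : Set Disk} {D E : Disk} {x : Plane}

/-- The hole through `x`: a component of the complement of the disks of `P`. It is empty when `x`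
lies in one of the disks. -/
def hole (P : Set Disk) (x : Plane) : Set Plane :=
  connectedComponentIn (packingUnion P)ᶜ x

/-- The disks of `P` bordering the hole through `x`; in a compact packing there are three of
them. -/
def holeDisks (P : Set Disk) (x : Plane) : Set Disk :=
  {d ∈ P | (closure (hole P x) ∩ d.set).Nonempty}

-- Otherwise a ray leaving `T` from a point of the hole moves away from every bordering center, so
-- it never enters a bordering disk and stays in the bounded hole.
theorem hole_subset_of_center_mem (hK : IsClosed (packingUnion P))
    (hbdd : Bornology.IsBounded (hole P x)) {T : Set Plane} (hTconvex : Convex ℝ T)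
    (hTclosed : IsClosed T) (hTne : T.Nonempty) (hT : ∀ d ∈ holeDisks P x, d.center ∈ T) :
    hole P x ⊆ T := by
  intro y hy
  by_contra hyT
  obtain ⟨w, hw, hdist⟩ :=
    exists_ne_zero_forall_dist_le_dist_add_smul hTne hTclosed.isComplete hTconvex hyT
  have hray : IsPreconnected ((fun t : ℝ ↦ y + t • w) '' Ici 0) :=
    isPreconnected_Ici.image _ (by fun_prop)
  refine not_isBounded_image_add_smul_Ici y hw (hbdd.subset ?_)
  refine hray.subset_of_closure_inter_subset hK.isOpen_compl.connectedComponentIn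
    ⟨y, ⟨0, self_mem_Ici, by simp⟩, hy⟩ ?_
  rintro _ ⟨hz, t, ht, rfl⟩
  refine closure_connectedComponentIn_inter_subset _ _ ⟨hz, fun hmem ↦ ?_⟩
  obtain ⟨d, hd, hzd⟩ := mem_packingUnion.1 hmem
  have hyd : y ∈ d.set := (hdist t ht d.center (hT d ⟨hd, _, hz, hzd⟩)).trans hzd
  exact connectedComponentIn_subset _ _ hy (d.set_subset_packingUnion hd hyd)

theorem IsCompactPacking.exists_holeDisks_eq (hP : IsCompactPacking P) (hx : x ∉ packingUnion P)
    (hD : D ∈ holeDisks P x) :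
    ∃ E F, D.Tangent E ∧ D.Tangent F ∧ E.Tangent F ∧ holeDisks P x = {D, E, F} := by
  obtain ⟨-, d₁, d₂, d₃, -, -, -, -, -, -, h₁₂, h₁₃, h₂₃, hset⟩ := hP.2 x hx
  change holeDisks P x = _ at hset
  rw [hset] at hD ⊢
  rcases hD with rfl | rfl | rfl
  · exact ⟨d₂, d₃, h₁₂, h₁₃, h₂₃, rfl⟩
  · exact ⟨d₁, d₃, h₁₂.symm, h₂₃, h₁₃, insert_comm _ _ _⟩
  · exact ⟨d₁, d₂, h₁₃.symm, h₂₃.symm, h₁₂, by rw [pair_comm d₂, insert_comm]⟩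

theorem IsCompactPacking.tangent_of_mem_holeDisks (hP : IsCompactPacking P)
    (hx : x ∉ packingUnion P) (hD : D ∈ holeDisks P x) (hE : E ∈ holeDisks P x) (hne : D ≠ E) :
    D.Tangent E := by
  obtain ⟨F, G, hF, hG, -, hset⟩ := hP.exists_holeDisks_eq hx hD
  rw [hset] at hE
  rcases hE with rfl | rfl | rfl
  exacts [absurd rfl hne, hF, hG]

-- Along the segment joining the centers, the last point of `Q` before the first point of `P \ Q`
-- either lies in both a disk of `Q` and one of `P \ Q` or is followed by a hole bordered by both.
theorem IsCompactPacking.exists_tangent_mem_diff (hP : IsCompactPacking P)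
    (hlf : LocallyFinite fun d : P ↦ d.1.set) (hQ : Q ⊆ P) (hD : D ∈ Q) (hE : E ∈ P \ Q) :
    ∃ d ∈ Q, ∃ e ∈ P \ Q, d.Tangent e := by
  have hline : Continuous (AffineMap.lineMap D.center E.center : ℝ → Plane) :=
    AffineMap.lineMap_continuous
  obtain ⟨s, t, hst, hs, ht, hfree⟩ := exists_le_image_Ioo_subset_compl_union hline
    (isClosed_packingUnion hlf hQ) (isClosed_packingUnion hlf (sdiff_subset (t := Q))) zero_le_one
    (D.set_subset_packingUnion hD (by simpa using D.center_mem_set))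
    (E.set_subset_packingUnion hE (by simpa using E.center_mem_set))
  rw [← packingUnion_union, union_sdiff_cancel hQ] at hfree
  obtain ⟨d, hd, hsd⟩ := mem_packingUnion.1 hs
  obtain ⟨e, he, hte⟩ := mem_packingUnion.1 ht
  have hne : d ≠ e := fun h ↦ he.2 (h ▸ hd)
  refine ⟨d, hd, e, he, ?_⟩
  rcases hst.eq_or_lt with rfl | hlt
  · exact ((dist_triangle_left _ _ _).trans (add_le_add hsd hte)).antisymm
      (hP.1.radius_add_radius_le_dist (hQ hd) he.1 hne)
  · obtain ⟨v, hv⟩ := exists_between hlt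
    have hcl := image_Icc_subset_closure_connectedComponentIn hline hv hfree
    exact hP.tangent_of_mem_holeDisks (hfree (mem_image_of_mem _ hv))
      ⟨hQ hd, _, hcl (mem_image_of_mem _ (left_mem_Icc.2 hst)), hsd⟩
      ⟨he.1, _, hcl (mem_image_of_mem _ (right_mem_Icc.2 hst)), hte⟩ hne

end Holes

section Direction

open Real

/-- The unit vector of the plane at angle `θ` from the first coordinate axis. -/
noncomputable def direction (θ : ℝ) : Plane := !₂[cos θ, sin θ]

theorem inner_direction (θ φ : ℝ) : inner ℝ (direction θ) (direction φ) = cos (θ - φ) := by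
  simp only [direction, EuclideanSpace.inner_eq_star_dotProduct, star_trivial, cos_sub,
    Matrix.vec2_dotProduct']
  ring

theorem norm_direction (θ : ℝ) : ‖direction θ‖ = 1 := by
  rw [← sq_eq_sq₀ (norm_nonneg _) zero_le_one, ← real_inner_self_eq_norm_sq, inner_direction]
  simp

theorem direction_add_two_pi (θ : ℝ) : direction (θ + 2 * π) = direction θ := by
  simp [direction]

theorem norm_smul_direction_sub_sq (r s θ φ : ℝ) :
    ‖r • direction θ - s • direction φ‖ ^ 2
      = (r - s) ^ 2 + 4 * (r * s) * sin ((θ - φ) / 2) ^ 2 := by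
  rw [norm_sub_sq_real, norm_smul, norm_smul, norm_direction, norm_direction, inner_smul_left,
    inner_smul_right, inner_direction, sin_sq_eq_half_sub, mul_div_cancel₀ _ two_ne_zero]
  simp only [norm_eq_abs, mul_one, sq_abs, conj_trivial]
  ring

theorem exists_eq_norm_smul_direction_add (v : Plane) (u : ℝ) :
    ∃ a ∈ Ioc (-π) π, v = ‖v‖ • direction (u + a) := by
  let z : ℂ := ⟨v 0, v 1⟩
  have hz : ‖z‖ = ‖v‖ := by
    simp [z, Complex.norm_eq_sqrt_sq_add_sq, EuclideanSpace.norm_eq]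
  let a : ℝ := ((z.arg - u : ℝ) : Angle).toReal
  have ha : ((u + a : ℝ) : Angle) = z.arg := by simp [a]
  have hcos : cos (u + a) = cos z.arg := by rw [← Angle.cos_coe, ha, Angle.cos_coe]
  have hsin : sin (u + a) = sin z.arg := by rw [← Angle.sin_coe, ha, Angle.sin_coe]
  refine ⟨a, ⟨Angle.neg_pi_lt_toReal _, Angle.toReal_le_pi _⟩, ?_⟩
  ext i
  fin_cases i
  · simp [direction, hcos, ← hz, Complex.norm_mul_cos_arg, z]
  · simp [direction, hsin, ← hz, Complex.norm_mul_sin_arg, z]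

-- Otherwise the bisector `(π + a) / 2` of `a` and `π` makes an obtuse angle with `0`, but with
-- neither `a` nor `b`.
theorem nonpos_of_forall_mul_cos_eq {a b A B r : ℝ} (hA : 0 ≤ A) (hB : 0 ≤ B) (hr : 0 < r)
    (h : ∀ φ, r * cos φ = A * cos (φ - a) + B * cos (φ - b)) (hab : a ≤ b) (hb : b ≤ π) :
    a ≤ 0 := by
  by_contra! ha
  have h₀ : cos ((π + a) / 2) < 0 := cos_neg_of_pi_div_two_lt_of_lt (by linarith) (by linarith)
  have h₁ : 0 ≤ cos ((π + a) / 2 - a) :=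
    cos_nonneg_of_neg_pi_div_two_le_of_le (by linarith) (by linarith)
  have h₂ : 0 ≤ cos ((π + a) / 2 - b) :=
    cos_nonneg_of_neg_pi_div_two_le_of_le (by linarith) (by linarith)
  linarith [h ((π + a) / 2), mul_neg_of_pos_of_neg hr h₀, mul_nonneg hA h₁, mul_nonneg hB h₂]

theorem neg_and_pos_and_lt_add_pi_of_smul_direction_eq {u a b A B r : ℝ} (hA : 0 ≤ A) (hB : 0 ≤ B)
    (hr : 0 < r) (h : r • direction u = A • direction (u + a) + B • direction (u + b))
    (ha : -π < a) (hab : a ≤ b) (hb : b ≤ π) (ha0 : a ≠ 0) (hb0 : b ≠ 0) :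
    a < 0 ∧ 0 < b ∧ b < a + π := by
  have hproj (φ : ℝ) : r * cos φ = A * cos (φ - a) + B * cos (φ - b) := by
    have hinner := congrArg (inner ℝ (direction (u + φ))) h
    simpa only [inner_add_right, inner_smul_right, inner_direction, add_sub_cancel_left,
      add_sub_add_left_eq_sub] using hinner
  have hproj_neg (φ : ℝ) : r * cos φ = B * cos (φ - -b) + A * cos (φ - -a) := by
    rw [← cos_neg φ, hproj, ← cos_neg (-φ - a), ← cos_neg (-φ - b), add_comm]
    ring_nf
  have ha' : a < 0 := (nonpos_of_forall_mul_cos_eq hA hB hr hproj hab hb).lt_of_ne ha0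
  have hb' : 0 < b := (neg_nonpos.1 (nonpos_of_forall_mul_cos_eq hB hA hr hproj_neg
    (neg_le_neg hab) (by linarith))).lt_of_ne' hb0
  refine ⟨ha', hb', ?_⟩
  by_contra! hle
  have h₀ : 0 < cos ((a + b) / 2) := cos_pos_of_mem_Ioo ⟨by linarith, by linarith⟩
  have h₁ : cos ((a + b) / 2 - a) ≤ 0 :=
    cos_nonpos_of_pi_div_two_le_of_le (by linarith) (by linarith)
  have h₂ : cos ((a + b) / 2 - b) ≤ 0 := by
    rw [← cos_neg]
    exact cos_nonpos_of_pi_div_two_le_of_le (by linarith) (by linarith)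
  linarith [hproj ((a + b) / 2), mul_pos hr h₀, mul_nonpos_of_nonneg_of_nonpos hA h₁,
    mul_nonpos_of_nonneg_of_nonpos hB h₂]

theorem sin_pi_div_five : sin (π / 5) = √(5 - √5) / (2 * √2) := by
  have h5 : √5 ^ 2 = 5 := sq_sqrt (by norm_num)
  have hlt : √5 ≤ 5 := sqrt_le_iff.2 (by norm_num)
  rw [← sq_eq_sq₀ (sin_nonneg_of_nonneg_of_le_pi (by positivity) (by linarith [pi_pos]))
    (by positivity), div_pow, mul_pow, sq_sqrt (sub_nonneg.2 hlt), sq_sqrt zero_le_two, sin_sq,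
    cos_pi_div_five]
  linear_combination -h5 / 16

end Direction

section Neighbors

open Real

theorem strictMonoOn_div_add {r : ℝ} (hr : 0 < r) :
    StrictMonoOn (fun s : ℝ ↦ s / (r + s)) (Ici 0) := by
  intro s hs t ht hst
  rw [mem_Ici] at hs ht
  rw [div_lt_div_iff₀ (by positivity) (by positivity)]
  linarith [mul_lt_mul_of_pos_left hst hr]

theorem div_add_self_self {r : ℝ} (hr : 0 < r) : r / (r + r) = 1 / 2 := by
  rw [← two_mul, div_mul_cancel_right₀ hr.ne', one_div]

variable {P : Set Disk} {D E F : Disk} {θ φ M : ℝ}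

/-- `E` is tangent to `D` and the ray from the center of `D` at angle `θ` passes through the center
of `E`. Angles are real numbers, so each tangent disk has infinitely many of them; this lets one
turn around `D` and count the turns. -/
def Disk.TangentAt (D E : Disk) (θ : ℝ) : Prop :=
  E.center = D.center + (D.radius + E.radius) • direction θ

namespace Disk

theorem half_le_radius_div (h : D.radius ≤ E.radius) :
    1 / 2 ≤ E.radius / (D.radius + E.radius) := by
  rw [← div_add_self_self D.radius_pos]
  exact (strictMonoOn_div_add D.radius_pos).monotoneOn D.radius_pos.le E.radius_pos.le h

theorem half_lt_radius_div (h : D.radius < E.radius) :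
    1 / 2 < E.radius / (D.radius + E.radius) := by
  rw [← div_add_self_self D.radius_pos]
  exact strictMonoOn_div_add D.radius_pos D.radius_pos.le E.radius_pos.le h

theorem Tangent.exists_tangentAt_add (h : D.Tangent E) (u : ℝ) :
    ∃ a ∈ Ioc (-π) π, D.TangentAt E (u + a) := by
  obtain ⟨a, ha, hv⟩ := exists_eq_norm_smul_direction_add (E.center - D.center) u
  rw [← dist_eq_norm, dist_comm, h] at hv
  exact ⟨a, ha, eq_add_of_sub_eq' hv⟩

theorem TangentAt.add_two_pi (h : D.TangentAt E θ) : D.TangentAt E (θ + 2 * π) := by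
  rwa [TangentAt, direction_add_two_pi]

theorem TangentAt.dist_sq (hE : D.TangentAt E θ) (hF : D.TangentAt F φ) :
    dist E.center F.center ^ 2 = (E.radius - F.radius) ^ 2 +
      4 * ((D.radius + E.radius) * (D.radius + F.radius)) * sin ((θ - φ) / 2) ^ 2 := by
  rw [hE, hF, dist_add_left, dist_eq_norm, norm_smul_direction_sub_sq, add_sub_add_left_eq_sub]

theorem TangentAt.sin_half_sub_sq (hE : D.TangentAt E θ) (hF : D.TangentAt F φ)
    (hEF : E.Tangent F) :
    sin ((θ - φ) / 2) ^ 2 =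
      E.radius / (D.radius + E.radius) * (F.radius / (D.radius + F.radius)) := by
  have hsq := hE.dist_sq hF
  have hD := D.radius_pos
  have hE' := E.radius_pos
  have hF' := F.radius_pos
  rw [hEF] at hsq
  field_simp
  linarith

theorem TangentAt.div_mul_div_le_sin_half_sub_sq (hE : D.TangentAt E θ) (hF : D.TangentAt F φ)
    (hEF : E.radius + F.radius ≤ dist E.center F.center) :
    E.radius / (D.radius + E.radius) * (F.radius / (D.radius + F.radius)) ≤
      sin ((θ - φ) / 2) ^ 2 := by
  have hsq := hE.dist_sq hF
  have hD := D.radius_pos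
  have hE' := E.radius_pos
  have hF' := F.radius_pos
  have hle : (E.radius + F.radius) ^ 2 ≤ dist E.center F.center ^ 2 := by gcongr
  rw [div_mul_div_comm, div_le_iff₀ (by positivity)]
  linarith

theorem TangentAt.ne_of_lt_of_lt (hE : D.TangentAt E θ) (hF : D.TangentAt F φ) (hlt : φ < θ)
    (hlt' : θ < φ + 2 * π) : E ≠ F := by
  rintro rfl
  have hsq := hE.dist_sq hF
  have hD := D.radius_pos
  have hE' := E.radius_pos
  have hsin : 0 < sin ((θ - φ) / 2) := sin_pos_of_pos_of_lt_pi (by linarith) (by linarith)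
  have hpos : 0 < 4 * ((D.radius + E.radius) * (D.radius + E.radius)) * sin ((θ - φ) / 2) ^ 2 := by
    positivity
  rw [dist_self] at hsq
  linarith

theorem TangentAt.sub_lt_two_mul {x : ℝ} (hE : D.TangentAt E θ) (hF : D.TangentAt F φ)
    (hEF : E.Tangent F) (hEM : E.radius ≤ M) (hFM : F.radius ≤ M) (hlt : φ < θ) (hltpi : θ < φ + π)
    (hx : x ∈ Icc 0 (π / 2)) (hM : M / (D.radius + M) < sin x) : θ - φ < 2 * x := by
  have hratio {G : Disk} (hG : G.radius ≤ M) : G.radius / (D.radius + G.radius) < sin x :=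
    ((strictMonoOn_div_add D.radius_pos).monotoneOn G.radius_pos.le
      (G.radius_pos.le.trans hG) hG).trans_lt hM
  have hsq : sin ((θ - φ) / 2) ^ 2 < sin x ^ 2 := by
    rw [hE.sin_half_sub_sq hF hEF, sq]
    have hD := D.radius_pos
    have hF' := F.radius_pos
    have hE' := E.radius_pos
    exact mul_lt_mul'' (hratio hEM) (hratio hFM) (by positivity) (by positivity)
  have hsin : sin ((θ - φ) / 2) < sin x :=
    lt_of_pow_lt_pow_left₀ 2 (sin_nonneg_of_nonneg_of_le_pi hx.1 (by linarith [hx.2])) hsq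
  have hhalf := (strictMonoOn_sin.lt_iff_lt ⟨by linarith, by linarith⟩
    ⟨by linarith [hx.1], hx.2⟩).1 hsin
  linarith

end Disk

theorem IsPacking.div_mul_div_le_sin_half_sub_sq (hP : IsPacking P) (hE : E ∈ P) (hF : F ∈ P)
    (hEθ : D.TangentAt E θ) (hFφ : D.TangentAt F φ) (hlt : φ < θ) (hlt' : θ < φ + 2 * π) :
    E.radius / (D.radius + E.radius) * (F.radius / (D.radius + F.radius)) ≤
      sin ((θ - φ) / 2) ^ 2 :=
  hEθ.div_mul_div_le_sin_half_sub_sq hFφ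
    (hP.radius_add_radius_le_dist hE hF (hEθ.ne_of_lt_of_lt hFφ hlt hlt'))

theorem IsPacking.pi_div_three_le_sub (hP : IsPacking P) (hE : E ∈ P) (hF : F ∈ P)
    (hDE : D.radius ≤ E.radius) (hDF : D.radius ≤ F.radius) (hEθ : D.TangentAt E θ)
    (hFφ : D.TangentAt F φ) (hlt : φ < θ) : π / 3 ≤ θ - φ := by
  by_contra! hlt'
  have hsin : sin ((θ - φ) / 2) < 1 / 2 := by
    rw [← sin_pi_div_six]
    exact sin_lt_sin_of_lt_of_le_pi_div_two (by linarith) (by linarith) (by linarith)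
  have hsin0 : 0 < sin ((θ - φ) / 2) := sin_pos_of_pos_of_lt_pi (by linarith) (by linarith)
  have hprod : 1 / 2 * (1 / 2) ≤ E.radius / (D.radius + E.radius) *
      (F.radius / (D.radius + F.radius)) :=
    mul_le_mul (Disk.half_le_radius_div hDE) (Disk.half_le_radius_div hDF) one_half_pos.le
      (one_half_pos.le.trans (Disk.half_le_radius_div hDE))
  have hle := hP.div_mul_div_le_sin_half_sub_sq hE hF hEθ hFφ hlt (by linarith [pi_pos])
  linarith [mul_self_lt_mul_self hsin0.le hsin]

theorem IsPacking.pi_div_three_lt_sub (hP : IsPacking P) (hE : E ∈ P) (hF : F ∈ P)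
    (hDE : D.radius ≤ E.radius) (hDF : D.radius < F.radius) (hEθ : D.TangentAt E θ)
    (hFφ : D.TangentAt F φ) (hlt : φ < θ) : π / 3 < θ - φ := by
  refine (hP.pi_div_three_le_sub hE hF hDE hDF.le hEθ hFφ hlt).lt_of_ne fun heq ↦ ?_
  have hle := hP.div_mul_div_le_sin_half_sub_sq hE hF hEθ hFφ hlt (by linarith [pi_pos])
  have hsixth : (θ - φ) / 2 = π / 6 := by linarith
  rw [hsixth, sin_pi_div_six, sq] at hle
  exact hle.not_gt (mul_lt_mul' (Disk.half_le_radius_div hDE) (Disk.half_lt_radius_div hDF)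
    one_half_pos.le (one_half_pos.trans_le (Disk.half_le_radius_div hDE)))

theorem IsPacking.tangentAt_of_mem_set (hP : IsPacking P) (hD : D ∈ P) (hE : E ∈ P) (hne : D ≠ E)
    (h : D.center + D.radius • direction θ ∈ E.set) : D.TangentAt E θ := by
  have hD' := D.radius_pos
  have hE' := E.radius_pos
  set p := D.center + D.radius • direction θ with hp
  have hDp : dist D.center p = D.radius := by
    rw [hp, dist_self_add_right, norm_smul, norm_direction, mul_one, norm_of_nonneg hD'.le]
  have hle := hP.radius_add_radius_le_dist hD hE hne
  have htri := dist_triangle D.center p E.center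
  have hpE : dist p E.center = E.radius := le_antisymm h (by linarith)
  have hDE : dist D.center E.center = D.radius + E.radius := by linarith
  have hline : p = AffineMap.lineMap D.center E.center (D.radius / (D.radius + E.radius)) := by
    apply eq_lineMap_of_dist_eq_mul_of_dist_eq_mul <;> rw [hDE] <;> field_simp
    · exact hDp
    · rw [hpE]
      ring
  rw [AffineMap.lineMap_apply_module', hp, add_comm, add_left_inj, div_eq_inv_mul, mul_smul,
    eq_inv_smul_iff₀ (by positivity), smul_comm] at hline
  exact eq_add_of_sub_eq' (smul_right_injective _ hD'.ne' hline).symm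

theorem exists_Ioo_image_subset_compl_packingUnion (hlf : LocallyFinite fun d : P ↦ d.1.set)
    (h : D.center + D.radius • direction θ ∉ packingUnion (P \ {D})) :
    ∃ t, D.radius < t ∧ (fun s : ℝ ↦ D.center + s • direction θ) '' Ioo D.radius t ⊆
      (packingUnion P)ᶜ := by
  have hcont : Continuous fun s : ℝ ↦ D.center + s • direction θ := by fun_prop
  have hmem := hcont.continuousAt.preimage_mem_nhds
    ((isClosed_packingUnion hlf sdiff_subset).isOpen_compl.mem_nhds h)
  obtain ⟨t, ht, hsub⟩ := mem_nhdsGT_iff_exists_Ioo_subset.1 (mem_nhdsWithin_of_mem_nhds hmem)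
  refine ⟨t, ht, ?_⟩
  rintro _ ⟨s, hs, rfl⟩ hs'
  obtain ⟨d, hd, hsd⟩ := mem_packingUnion.1 hs'
  obtain rfl | hne := eq_or_ne d D
  · rw [Disk.set, mem_closedBall, dist_self_add_left, norm_smul, norm_direction, mul_one] at hsd
    exact hs.1.not_ge ((le_abs_self s).trans hsd)
  · exact hsub hs (mem_packingUnion.2 ⟨d, ⟨hd, hne⟩, hsd⟩)

theorem IsCompactPacking.tangentAt_or_mem_convexHull (hP : IsCompactPacking P)
    (hlf : LocallyFinite fun d : P ↦ d.1.set) (hD : D ∈ P) (u : ℝ) :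
    (∃ E ∈ P, D.TangentAt E u) ∨ ∃ E ∈ P, ∃ F ∈ P, D.Tangent E ∧ D.Tangent F ∧ E.Tangent F ∧
      D.center + D.radius • direction u ∈ convexHull ℝ {D.center, E.center, F.center} := by
  by_cases hp : D.center + D.radius • direction u ∈ packingUnion (P \ {D})
  · obtain ⟨E, ⟨hE, hED⟩, hmem⟩ := mem_packingUnion.1 hp
    exact .inl ⟨E, hE, hP.1.tangentAt_of_mem_set hD hE (Ne.symm hED) hmem⟩
  right
  obtain ⟨t, ht, hfree⟩ := exists_Ioo_image_subset_compl_packingUnion hlf hp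
  obtain ⟨v, hv⟩ := exists_between ht
  set x := D.center + v • direction u
  have hxP : x ∉ packingUnion P := hfree (mem_image_of_mem _ hv)
  have hpcl : D.center + D.radius • direction u ∈ closure (hole P x) :=
    image_Icc_subset_closure_connectedComponentIn (by fun_prop) hv hfree
      (mem_image_of_mem _ (left_mem_Icc.2 ht.le))
  have hpD : D.center + D.radius • direction u ∈ D.set := by
    simp [Disk.set, norm_smul, norm_direction, abs_of_pos D.radius_pos]
  obtain ⟨E, F, hDE, hDF, hEF, hset⟩ := hP.exists_holeDisks_eq hxP ⟨hD, _, hpcl, hpD⟩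
  have hE : E ∈ holeDisks P x := by simp [hset]
  have hF : F ∈ holeDisks P x := by simp [hset]
  have hclosed : IsClosed (convexHull ℝ {D.center, E.center, F.center}) :=
    (toFinite _).isClosed_convexHull ℝ
  have hhole : hole P x ⊆ convexHull ℝ {D.center, E.center, F.center} := by
    refine hole_subset_of_center_mem (isClosed_packingUnion hlf subset_rfl) (hP.2 x hxP).1
      (convex_convexHull ℝ _) hclosed (convexHull_nonempty_iff.2 (insert_nonempty _ _))
      fun d hd ↦ subset_convexHull ℝ _ ?_
    rw [hset] at hd
    rcases hd with rfl | rfl | rfl <;> simp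
  exact ⟨E, hE.1, F, hF.1, hDE, hDF, hEF, closure_minimal hhole hclosed hpcl⟩

theorem IsCompactPacking.exists_sector (hP : IsCompactPacking P)
    (hlf : LocallyFinite fun d : P ↦ d.1.set) (hD : D ∈ P) (u : ℝ) :
    (∃ E ∈ P, D.TangentAt E u) ∨ ∃ E ∈ P, ∃ F ∈ P, ∃ α β, D.TangentAt E α ∧ D.TangentAt F β ∧
      E.Tangent F ∧ α < u ∧ u < β ∧ β < α + π := by
  rcases hP.tangentAt_or_mem_convexHull hlf hD u with h | ⟨E, hE, F, hF, hDE, hDF, hEF, hmem⟩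
  · exact .inl h
  obtain ⟨a, ha, hEa⟩ := hDE.exists_tangentAt_add u
  obtain ⟨b, hb, hFb⟩ := hDF.exists_tangentAt_add u
  obtain rfl | ha0 := eq_or_ne a 0
  · exact .inl ⟨E, hE, by rwa [add_zero] at hEa⟩
  obtain rfl | hb0 := eq_or_ne b 0
  · exact .inl ⟨F, hF, by rwa [add_zero] at hFb⟩
  right
  rw [hEa, hFb] at hmem
  obtain ⟨A, B, hA, hB, hAB⟩ := exists_nonneg_of_mem_convexHull_triple hmem
  rw [add_right_inj, smul_smul, smul_smul] at hAB
  have hE₀ : 0 ≤ D.radius + E.radius := add_nonneg D.radius_pos.le E.radius_pos.le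
  have hF₀ : 0 ≤ D.radius + F.radius := add_nonneg D.radius_pos.le F.radius_pos.le
  rcases le_total a b with hab | hba
  · obtain ⟨haneg, hbpos, hlt⟩ := neg_and_pos_and_lt_add_pi_of_smul_direction_eq
      (mul_nonneg hA hE₀) (mul_nonneg hB hF₀) D.radius_pos hAB ha.1 hab hb.2 ha0 hb0
    exact ⟨E, hE, F, hF, u + a, u + b, hEa, hFb, hEF, by linarith, by linarith, by linarith⟩
  · rw [add_comm] at hAB
    obtain ⟨hbneg, hapos, hlt⟩ := neg_and_pos_and_lt_add_pi_of_smul_direction_eq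
      (mul_nonneg hB hF₀) (mul_nonneg hA hE₀) D.radius_pos hAB hb.1 hba ha.2 hb0 ha0
    exact ⟨F, hF, E, hE, u + b, u + a, hFb, hEa, hEF.symm, by linarith, by linarith, by linarith⟩

-- The sector containing the direction `θ + π / 6` starts at or before `θ`, since two neighbors
-- are at least `π / 3` apart; the neighbor where it ends is the next one.
theorem IsCompactPacking.exists_tangentAt_mem_Ioo (hP : IsCompactPacking P) (hD : D ∈ P)
    (hmin : ∀ d ∈ P, D.radius ≤ d.radius) (hmax : ∀ d ∈ P, d.radius ≤ M)
    (hM : M / (D.radius + M) < sin (π / 5)) (hE : E ∈ P) (hEθ : D.TangentAt E θ) :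
    ∃ F ∈ P, ∃ φ ∈ Ioo θ (θ + 2 * (π / 5)), D.TangentAt F φ := by
  have hπ := pi_pos
  have hgap {F G : Disk} {α β : ℝ} (hF : F ∈ P) (hG : G ∈ P) (hFα : D.TangentAt F α)
      (hGβ : D.TangentAt G β) : β < α → π / 3 ≤ α - β :=
    hP.1.pi_div_three_le_sub hF hG (hmin F hF) (hmin G hG) hFα hGβ
  rcases hP.exists_sector (hP.1.locallyFinite D.radius_pos hmin) hD (θ + π / 6) with
    ⟨F, hF, hFu⟩ | ⟨F, hF, G, hG, α, β, hFα, hGβ, hFG, hαu, huβ, hβα⟩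
  · linarith [hgap hF hE hFu hEθ (by linarith)]
  · have hαθ : α ≤ θ := by
      by_contra! hlt
      linarith [hgap hF hE hFα hEθ hlt]
    have hsector := hGβ.sub_lt_two_mul hFα hFG.symm (hmax G hG) (hmax F hF) (by linarith) hβα
      ⟨by positivity, by linarith⟩ hM
    exact ⟨G, hG, β, ⟨by linarith, by linarith⟩, hGβ⟩

theorem IsCompactPacking.exists_tangentAt_mem_Icc (hP : IsCompactPacking P) (hD : D ∈ P)
    (hmin : ∀ d ∈ P, D.radius ≤ d.radius) (hmax : ∀ d ∈ P, d.radius ≤ M)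
    (hM : M / (D.radius + M) < sin (π / 5)) (hE : E ∈ P) (hEθ : D.TangentAt E θ) (n : ℕ) :
    ∃ F ∈ P, ∃ φ ∈ Icc (θ + n * (π / 3)) (θ + n * (2 * (π / 5))), D.TangentAt F φ := by
  induction n with
  | zero => exact ⟨E, hE, θ, by simp, hEθ⟩
  | succ n ih =>
    obtain ⟨F, hF, φ, hφ, hFφ⟩ := ih
    obtain ⟨G, hG, ψ, hψ, hGψ⟩ := hP.exists_tangentAt_mem_Ioo hD hmin hmax hM hF hFφ
    have hgap := hP.1.pi_div_three_le_sub hG hF (hmin G hG) (hmin F hF) hGψ hFφ hψ.1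
    push_cast
    exact ⟨G, hG, ψ, ⟨by linarith [hφ.1], by linarith [hφ.2, hψ.2]⟩, hGψ⟩

-- Otherwise five steps from `E` around `D` turn by more than `5π / 3` but less than `2π`, leaving
-- a gap shorter than `π / 3` before `E` is met again.
theorem IsCompactPacking.sin_pi_div_five_le (hP : IsCompactPacking P) (hD : D ∈ P) (hE : E ∈ P)
    (hmin : ∀ d ∈ P, D.radius ≤ d.radius) (hmax : ∀ d ∈ P, d.radius ≤ M)
    (hlt : D.radius < E.radius) (hDE : D.Tangent E) : sin (π / 5) ≤ M / (D.radius + M) := by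
  by_contra! hM
  obtain ⟨a, -, hEa⟩ := hDE.exists_tangentAt_add 0
  obtain ⟨F, hF, φ, hφ, hFφ⟩ := hP.exists_tangentAt_mem_Ioo hD hmin hmax hM hE hEa
  have hfirst := hP.1.pi_div_three_lt_sub hF hE (hmin F hF) hlt hFφ hEa hφ.1
  obtain ⟨G, hG, ψ, hψ, hGψ⟩ := hP.exists_tangentAt_mem_Icc hD hmin hmax hM hF hFφ 4
  rw [Nat.cast_ofNat] at hψ
  have hlast := hP.1.pi_div_three_le_sub hE hG hlt.le (hmin G hG) hEa.add_two_pi hGψ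
    (by linarith [hφ.2, hψ.2])
  linarith [hψ.1]

end Neighbors

theorem compact_packing_uniformity_bound_general (P : Set Disk) (hP : IsCompactPacking P) {m M : ℝ}
    (hm : IsLeast (Disk.radius '' P) m) (hM : M ∈ upperBounds (Disk.radius '' P))
    (hnt : (Disk.radius '' P).Nontrivial) :
    m / M ≤ 2 * Real.sqrt 2 / Real.sqrt (5 - Real.sqrt 5) - 1 := by
  obtain ⟨⟨D, hD, rfl⟩, hmin⟩ := hm
  rw [mem_lowerBounds, forall_mem_image] at hmin
  rw [mem_upperBounds, forall_mem_image] at hM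
  obtain ⟨_, ⟨E, hE, rfl⟩, hED⟩ := hnt.exists_ne D.radius
  obtain ⟨d, ⟨hd, hdD : d.radius = D.radius⟩, e, ⟨he, heD⟩, hde⟩ :=
    hP.exists_tangent_mem_diff (hP.1.locallyFinite D.radius_pos @hmin)
      (sep_subset P fun d ↦ d.radius = D.radius) ⟨hD, rfl⟩ ⟨hE, fun h ↦ hED h.2⟩
  have hlt : d.radius < e.radius := hdD ▸ (hmin he).lt_of_ne fun h ↦ heD ⟨he, h.symm⟩
  have hsin := hP.sin_pi_div_five_le hd he (hdD ▸ @hmin) @hM hlt hde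
  have hM0 : 0 < M := D.radius_pos.trans_le (hM hD)
  have hsin0 : 0 < Real.sin (Real.pi / 5) :=
    Real.sin_pos_of_pos_of_lt_pi (by positivity) (by linarith [Real.pi_pos])
  have hinv := inv_anti₀ hsin0 hsin
  rw [sin_pi_div_five, inv_div, inv_div, add_div, div_self hM0.ne', hdD] at hinv
  exact le_sub_iff_add_le.2 hinv

/-- in a compact packing with finitely many radii, at least two of which
are distinct, the ratio of the smallest to the largest radius is at most
`2√2/√(5 − √5) − 1`. -/
theorem compact_packing_uniformity_bound (P : Set Disk) (hP : IsCompactPacking P)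
    (hfin : (Disk.radius '' P).Finite) (h2 : 2 ≤ (Disk.radius '' P).ncard) :
    sInf (Disk.radius '' P) / sSup (Disk.radius '' P)
      ≤ 2 * Real.sqrt 2 / Real.sqrt (5 - Real.sqrt 5) - 1 := by
  have hnt : (Disk.radius '' P).Nontrivial := (one_lt_ncard_iff_nontrivial_and_finite.1 h2).1
  exact compact_packing_uniformity_bound_general P hP
    ⟨hnt.nonempty.csInf_mem hfin, fun _ ↦ csInf_le hfin.bddBelow⟩
    (fun _ ↦ le_csSup hfin.bddAbove) hnt
end

section
/- Let P be a packing of the Euclidean plane by disks whose radii all lie in the interval [r, 1] for some 0 < r ≤ 1. If the density of P is strictly greater than π/√12 (the density of the hexagonal compact packing), then r ≤ √((7·tan(π/7) − 6·tan(π/6)) / (6·tan(π/6) − 5·tan(π/5))). -/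
open Metric Set

/- In the power diagram of the disks, whose cells do not overlap and contain their disks, there
are on average at most six corners per cell: each corner lies in at least three cells, each cell
has at most one highest and one lowest corner with respect to a generic direction, and each corner
is lateral, neither highest nor lowest, for at most one cell on either side of it. Summing the
number `n` of corners of a cell over all `N` cells, with `V` corners in total, therefore gives
`3 V ≤ ∑ n ≤ 2 N + 2 V`, whence `∑ n ≤ 6 N`.

Let `f x = x tan (π / x)`, a convex decreasing function. A cell with `n` corners around a disk of
radius `ρ` has area at least `ρ ^ 2` times the value at `n` of any tangent line of `f`. If
`f 6 - f 7 ≤ (f 5 - f 6) r ^ 2`, then comparing the tangent lines at `5`, `6` and `7` with the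
chords of `f` over `[5, 6]` and `[6, 7]` bounds this area, for `ρ` in `[r, 1]`, below by
`f 6 * ρ ^ 2 + (f 6 - f 7) * (6 - n)`. The second term has nonnegative sum, so the density is at
most `π / f 6 = π / √12`. -/

open EuclideanGeometry Module
open scoped RealInnerProductSpace Topology

section PowerCell

variable {ι X : Type*} [MetricSpace X]

/-- The amount by which the power of a point with respect to `b` exceeds its power with respect
to `a`; in a Euclidean space, an affine function of the point, which vanishes on the radical axis
of `a` and `b`. -/
def powerGap (a b : Sphere X) (x : X) : ℝ := b.power x - a.power x

lemma continuous_powerGap (a b : Sphere X) : Continuous (powerGap a b) := by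
  unfold powerGap Sphere.power
  fun_prop

/-- The cell of `s i` in the power diagram (Laguerre tessellation) of the spheres `s`. -/
def powerCell (s : ι → Sphere X) (i : ι) : Set X := {x | ∀ j, (s i).power x ≤ (s j).power x}

variable {s : ι → Sphere X} {i j : ι} {x : X}

lemma mem_powerCell_iff_powerGap_nonneg :
    x ∈ powerCell s i ↔ ∀ j, 0 ≤ powerGap (s i) (s j) x :=
  forall_congr' fun _ => sub_nonneg.symm

lemma powerGap_eq_zero (hi : x ∈ powerCell s i) (hj : x ∈ powerCell s j) :
    powerGap (s i) (s j) x = 0 :=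
  sub_eq_zero.2 ((hj i).antisymm (hi j))

lemma mem_powerCell_of_powerGap_eq_zero (hi : x ∈ powerCell s i)
    (hij : powerGap (s i) (s j) x = 0) : x ∈ powerCell s j :=
  fun k => (sub_eq_zero.1 hij).trans_le (hi k)

/-- `F` determines the cell of `s i` if the inequalities `0 ≤ powerGap (s i) (s j)`, `j ∈ F`, hold
only on the cell. These inequalities cut out the half-spaces bounded by the radical axes. -/
def DeterminesPowerCell (s : ι → Sphere X) (i : ι) (F : Finset ι) : Prop :=
  ∀ x, (∀ j ∈ F, 0 ≤ powerGap (s i) (s j) x) → x ∈ powerCell s i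

lemma determinesPowerCell_univ_erase [Fintype ι] [DecidableEq ι] :
    DeterminesPowerCell s i (Finset.univ.erase i) := by
  refine fun x hx => mem_powerCell_iff_powerGap_nonneg.2 fun j => ?_
  rcases eq_or_ne j i with rfl | hji
  · exact (sub_self _).ge
  · exact hx j (Finset.mem_erase.2 ⟨hji, Finset.mem_univ j⟩)

lemma isClosed_powerCell (s : ι → Sphere X) (i : ι) : IsClosed (powerCell s i) := by
  have eq_iInter : powerCell s i = ⋂ j, {x | 0 ≤ powerGap (s i) (s j) x} := by
    ext x
    simp only [mem_powerCell_iff_powerGap_nonneg, mem_iInter, mem_ofPred_eq]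
  rw [eq_iInter]
  exact isClosed_iInter fun j => isClosed_le continuous_const (continuous_powerGap _ _)

lemma closedBall_subset_powerCell
    (h : ∀ j ≠ i, ∀ x ∈ closedBall (s i).center (s i).radius, 0 ≤ (s j).power x) :
    closedBall (s i).center (s i).radius ⊆ powerCell s i := by
  intro x hx j
  rcases eq_or_ne j i with rfl | hji
  · exact le_rfl
  · exact ((Sphere.power_nonpos_iff_dist_center_le_radius (dist_nonneg.trans hx)).2 hx).trans
      (h j hji x hx)

lemma center_ne_center_of_power_nonneg {a b : Sphere X} (ha : 0 < a.radius) (hb : 0 < b.radius)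
    (h : ∀ x ∈ closedBall a.center a.radius, 0 ≤ b.power x) : a.center ≠ b.center := by
  intro heq
  have hpow := h _ (mem_closedBall_self ha.le)
  rw [heq, Sphere.power, dist_self] at hpow
  nlinarith

end PowerCell

section PowerDiagram

variable {ι E : Type*} [NormedAddCommGroup E] [InnerProductSpace ℝ E]

lemma powerGap_add (a b : Sphere E) (x u : E) :
    powerGap a b (x + u) = powerGap a b x - 2 * ⟪b.center - a.center, u⟫ := by
  have dist_add_sq (c : E) : dist (x + u) c ^ 2 = dist x c ^ 2 + 2 * ⟪x - c, u⟫ + ‖u‖ ^ 2 := by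
    rw [dist_eq_norm, dist_eq_norm, add_sub_right_comm, norm_add_sq_real]
  have inner_centers : ⟪b.center - a.center, u⟫ = ⟪x - a.center, u⟫ - ⟪x - b.center, u⟫ := by
    rw [← inner_sub_left, sub_sub_sub_cancel_left]
  simp only [powerGap, Sphere.power, dist_add_sq, inner_centers]
  ring

lemma powerGap_add_smul (a b : Sphere E) (x u : E) (t : ℝ) :
    powerGap a b (x + t • u) = powerGap a b x - 2 * t * ⟪b.center - a.center, u⟫ := by
  rw [powerGap_add, real_inner_smul_right, mul_assoc]

lemma two_mul_inner_sub_eq_powerGap_sub (a b : Sphere E) (x y : E) :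
    2 * ⟪b.center - a.center, y - x⟫ = powerGap a b x - powerGap a b y := by
  conv_rhs => rw [← add_sub_cancel x y, powerGap_add]
  ring

lemma powerGap_combo (a b : Sphere E) (x y : E) {p q : ℝ} (hpq : p + q = 1) :
    powerGap a b (p • x + q • y) = p * powerGap a b x + q * powerGap a b y := by
  have hcombo : p • x + q • y = x + q • (y - x) := by
    rw [eq_sub_of_add_eq hpq]
    module
  have hgap := two_mul_inner_sub_eq_powerGap_sub a b x y
  rw [hcombo, powerGap_add_smul, eq_sub_of_add_eq hpq]
  linear_combination -q * hgap

variable {s : ι → Sphere E} {i j : ι} {u v x y : E}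

variable (s i) in
lemma convex_powerCell : Convex ℝ (powerCell s i) := by
  intro x hx y hy p q hp hq hpq
  rw [mem_powerCell_iff_powerGap_nonneg] at *
  intro j
  rw [powerGap_combo _ _ _ _ hpq]
  exact add_nonneg (mul_nonneg hp (hx j)) (mul_nonneg hq (hy j))

lemma eventually_add_smul_mem_powerCell [Finite ι] (hx : x ∈ powerCell s i)
    (hu : ∀ j, x ∈ powerCell s j → ⟪(s j).center - (s i).center, u⟫ ≤ 0) :
    ∀ᶠ t in 𝓝[>] (0 : ℝ), x + t • u ∈ powerCell s i := by
  simp only [mem_powerCell_iff_powerGap_nonneg, Filter.eventually_all]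
  intro j
  rcases (sub_nonneg.2 (hx j)).eq_or_lt with hzero | hpos
  · filter_upwards [self_mem_nhdsWithin] with t ht
    have hinner := hu j (mem_powerCell_of_powerGap_eq_zero hx hzero.symm)
    rw [powerGap_add_smul, powerGap, ← hzero]
    nlinarith [mem_Ioi.1 ht]
  · have hcont : Continuous fun t : ℝ => powerGap (s i) (s j) (x + t • u) :=
      (continuous_powerGap _ _).comp (by fun_prop)
    refine ((hcont.tendsto 0).eventually_const_le ?_).filter_mono nhdsWithin_le_nhds
    rwa [zero_smul, add_zero]

lemma mem_extremePoints_powerCell_iff [Finite ι] :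
    v ∈ (powerCell s i).extremePoints ℝ ↔ v ∈ powerCell s i ∧
      ∀ u, (∀ j, v ∈ powerCell s j → ⟪(s j).center - (s i).center, u⟫ = 0) → u = 0 := by
  constructor
  · refine fun hv => ⟨hv.1, fun u hu => ?_⟩
    obtain ⟨t, ⟨hplus, hminus⟩, ht⟩ :=
      ((eventually_add_smul_mem_powerCell hv.1 fun j hj => (hu j hj).le).and
        (eventually_add_smul_mem_powerCell (u := -u) hv.1 fun j hj => by
          rw [inner_neg_right, hu j hj, neg_zero])).and self_mem_nhdsWithin |>.exists
    have hmid : v ∈ openSegment ℝ (v + t • u) (v + t • -u) :=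
      ⟨1 / 2, 1 / 2, by norm_num, by norm_num, by norm_num, by module⟩
    have hfix := (mem_extremePoints_iff_left.1 hv).2 _ hplus _ hminus hmid
    exact (smul_eq_zero.1 (add_eq_left.1 hfix)).resolve_left (ne_of_gt ht)
  · rintro ⟨hv, hrigid⟩
    refine mem_extremePoints_iff_left.2 ⟨hv, ?_⟩
    rintro x hx y hy ⟨p, q, hp, hq, hpq, rfl⟩
    have hxy : y - x = 0 := by
      refine hrigid _ fun j hj => ?_
      have hgap := powerGap_eq_zero hv hj
      rw [powerGap_combo _ _ _ _ hpq] at hgap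
      have hx' := mem_powerCell_iff_powerGap_nonneg.1 hx j
      have hy' := mem_powerCell_iff_powerGap_nonneg.1 hy j
      have hgapx : powerGap (s i) (s j) x = 0 := by nlinarith
      have hgapy : powerGap (s i) (s j) y = 0 := by nlinarith
      linarith [two_mul_inner_sub_eq_powerGap_sub (s i) (s j) x y]
    rw [sub_eq_zero.1 hxy, ← add_smul, hpq, one_smul]

lemma mem_extremePoints_powerCell_of_mem [Finite ι] (hv : v ∈ (powerCell s i).extremePoints ℝ)
    (hj : v ∈ powerCell s j) : v ∈ (powerCell s j).extremePoints ℝ := by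
  rw [mem_extremePoints_powerCell_iff] at *
  refine ⟨hj, fun u hu => hv.2 u fun k hk => ?_⟩
  rw [← sub_sub_sub_cancel_right _ _ (s j).center, inner_sub_left, hu k hk, hu i hv.1, sub_zero]

variable (s) in
lemma finite_iUnion_extremePoints_powerCell [Finite ι] :
    (⋃ i, (powerCell s i).extremePoints ℝ).Finite := by
  refine Set.Finite.of_finite_image (f := fun v => {j | v ∈ powerCell s j}) (toFinite _) ?_
  intro v hv w _ hactive
  obtain ⟨i, hi⟩ := mem_iUnion.1 hv
  have mem_iff (j : ι) : v ∈ powerCell s j ↔ w ∈ powerCell s j := Set.ext_iff.1 hactive j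
  refine (sub_eq_zero.1 ((mem_extremePoints_powerCell_iff.1 hi).2 (w - v) fun j hj => ?_)).symm
  have hgap := two_mul_inner_sub_eq_powerGap_sub (s i) (s j) v w
  rw [powerGap_eq_zero hi.1 hj, powerGap_eq_zero ((mem_iff i).1 hi.1) ((mem_iff j).1 hj)] at hgap
  linarith

lemma finrank_lt_ncard_of_mem_extremePoints_powerCell [Finite ι]
    (hv : v ∈ (powerCell s i).extremePoints ℝ) :
    finrank ℝ E < {j | v ∈ powerCell s j}.ncard := by
  obtain ⟨hi, hrigid⟩ := mem_extremePoints_powerCell_iff.1 hv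
  set neighbors := {j | v ∈ powerCell s j} \ {i}
  let f : E →ₗ[ℝ] neighbors → ℝ :=
    LinearMap.pi fun j => (innerₛₗ ℝ ((s j).center - (s i).center))
  have hf : Function.Injective f := by
    refine (injective_iff_map_eq_zero f).2 fun u hu => hrigid u fun j hj => ?_
    by_cases hji : j = i
    · rw [hji, sub_self, inner_zero_left]
    · exact congr_fun hu ⟨j, hj, hji⟩
  have hdim := LinearMap.finrank_le_finrank_of_injective hf
  have := Fintype.ofFinite neighbors
  rw [finrank_fintype_fun_eq_card, ← Nat.card_eq_fintype_card, Nat.card_coe_set_eq] at hdim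
  exact hdim.trans_lt (ncard_sdiff_singleton_lt_of_mem hi)

lemma eq_of_isMaxOn_powerCell [Finite ι] {ℓ : E →ₗ[ℝ] ℝ} (hℓ : ℓ ≠ 0)
    (hgeneric : ∀ j ≠ i, ∀ u, ⟪(s j).center - (s i).center, u⟫ = 0 → ℓ u = 0 → u = 0)
    (hx : x ∈ powerCell s i) (hy : y ∈ powerCell s i)
    (hmaxx : IsMaxOn ℓ (powerCell s i) x) (hmaxy : IsMaxOn ℓ (powerCell s i) y) : x = y := by
  by_contra hxy
  have hℓxy : ℓ x = ℓ y := (hmaxy hx).antisymm (hmaxx hy)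
  set m : E := (1 / 2 : ℝ) • x + (1 / 2 : ℝ) • y with hm
  have hm_mem : m ∈ powerCell s i :=
    convex_powerCell s i hx hy (by norm_num) (by norm_num) (by norm_num)
  have hℓm : ℓ m = ℓ x := by
    rw [hm, map_add, map_smul, map_smul, ← hℓxy, ← add_smul]
    norm_num
  have hactive (j : ι) (hj : m ∈ powerCell s j) : j = i := by
    by_contra hji
    have hgap := powerGap_eq_zero hm_mem hj
    rw [hm, powerGap_combo _ _ _ _ (by norm_num)] at hgap
    have hinner := two_mul_inner_sub_eq_powerGap_sub (s i) (s j) x y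
    have hx' := mem_powerCell_iff_powerGap_nonneg.1 hx j
    have hy' := mem_powerCell_iff_powerGap_nonneg.1 hy j
    refine hxy (sub_eq_zero.1 (hgeneric j hji (y - x) (by linarith) ?_)).symm
    rw [map_sub, hℓxy, sub_self]
  obtain ⟨u, hu⟩ : ∃ u, 0 < ℓ u := by
    obtain ⟨u, hu⟩ := DFunLike.ne_iff.1 hℓ
    rcases lt_or_gt_of_ne hu with h | h
    · exact ⟨-u, by rw [map_neg]; exact neg_pos.2 h⟩
    · exact ⟨u, h⟩
  obtain ⟨t, hmem, ht⟩ := ((eventually_add_smul_mem_powerCell (u := u) hm_mem fun j hj => by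
    rw [hactive j hj, sub_self, inner_zero_left]).and self_mem_nhdsWithin).exists
  have hle : ℓ (m + t • u) ≤ ℓ x := hmaxx hmem
  rw [map_add, map_smul, hℓm, smul_eq_mul] at hle
  nlinarith [mul_pos (mem_Ioi.1 ht) hu]

lemma eq_of_add_smul_mem_powerCell {p q : ℝ} (hi : v ∈ powerCell s i) (hj : v ∈ powerCell s j)
    (hvi : v + p • u ∈ powerCell s i) (hvj : v + q • u ∈ powerCell s j) (hpq : 0 < p * q)
    (hne : i ≠ j → ⟪(s i).center - (s j).center, u⟫ ≠ 0) : i = j := by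
  by_contra hij
  have hgapi := mem_powerCell_iff_powerGap_nonneg.1 hvi j
  have hgapj := mem_powerCell_iff_powerGap_nonneg.1 hvj i
  rw [powerGap_add_smul, powerGap_eq_zero hi hj, ← neg_sub (s i).center, inner_neg_left] at hgapi
  rw [powerGap_add_smul, powerGap_eq_zero hj hi] at hgapj
  have hsq := pow_pos (abs_pos.2 (hne hij)) 2
  rw [sq_abs] at hsq
  set k := ⟪(s i).center - (s j).center, u⟫
  have hp : 0 ≤ p * k := by linarith
  have hq : q * k ≤ 0 := by linarith
  nlinarith [mul_nonneg hp (neg_nonneg.2 hq), mul_pos hpq hsq]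

lemma two_mul_norm_le_powerGap_of_closedBall_subset {r : ℝ} (hr : 0 ≤ r)
    (hball : closedBall x r ⊆ powerCell s i) (j : ι) :
    2 * r * ‖(s j).center - (s i).center‖ ≤ powerGap (s i) (s j) x := by
  set d := (s j).center - (s i).center with hd
  rcases eq_or_ne d 0 with hzero | hne
  · rw [hzero, norm_zero, mul_zero]
    exact mem_powerCell_iff_powerGap_nonneg.1 (hball (mem_closedBall_self hr)) j
  have hnorm : ‖d‖ ≠ 0 := norm_ne_zero_iff.2 hne
  have hmem : x + (r / ‖d‖) • d ∈ powerCell s i := by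
    refine hball ?_
    rw [mem_closedBall, dist_self_add_left, norm_smul, norm_div, norm_norm,
      Real.norm_of_nonneg hr, div_mul_cancel₀ _ hnorm]
  have hgap := mem_powerCell_iff_powerGap_nonneg.1 hmem j
  rw [powerGap_add_smul, ← hd, real_inner_self_eq_norm_sq, sub_nonneg] at hgap
  refine le_of_eq_of_le ?_ hgap
  field_simp

end PowerDiagram

section CornerCount

lemma sum_ncard_eq_sum_ncard {α ι : Type*} [Fintype ι] (V : Finset α) (R : α → ι → Prop)
    (hR : ∀ v i, R v i → v ∈ V) :
    ∑ i, {v | R v i}.ncard = ∑ v ∈ V, {i | R v i}.ncard := by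
  classical
  have column (i : ι) : {v | R v i}.ncard = (V.bipartiteBelow R i).card := by
    rw [← ncard_coe_finset]
    congr 1
    ext v
    simpa [Finset.bipartiteBelow] using hR v i
  have row (v : α) : {i | R v i}.ncard = (Finset.univ.bipartiteAbove R v).card := by
    rw [← ncard_coe_finset]
    congr 1
    ext i
    simp [Finset.bipartiteAbove]
  simp only [column, row, Finset.sum_card_bipartiteAbove_eq_sum_card_bipartiteBelow]

lemma exists_mem_ne_map_eq_of_mem_extremePoints {E : Type*} [AddCommGroup E] [Module ℝ E]
    {K : Set E} (hK : Convex ℝ K) {v : E} (hv : v ∈ K.extremePoints ℝ) (ℓ : E →ₗ[ℝ] ℝ)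
    (hmax : ¬IsMaxOn ℓ K v) (hmin : ¬IsMinOn ℓ K v) : ∃ z ∈ K, z ≠ v ∧ ℓ z = ℓ v := by
  simp only [isMaxOn_iff, isMinOn_iff, not_forall, not_le] at hmax hmin
  obtain ⟨q, hq, hvq⟩ := hmax
  obtain ⟨p, hp, hpv⟩ := hmin
  obtain ⟨a, b, ha, hb, hab, hcombo⟩ : ℓ v ∈ openSegment ℝ (ℓ p) (ℓ q) := by
    rw [openSegment_eq_Ioo (hpv.trans hvq)]
    exact ⟨hpv, hvq⟩
  refine ⟨a • p + b • q, hK hp hq ha.le hb.le hab, fun heq => hpv.ne ?_, ?_⟩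
  · rw [(mem_extremePoints_iff_left.1 hv).2 p hp q hq ⟨a, b, ha, hb, hab, heq⟩]
  · rw [map_add, map_smul, map_smul, hcombo]

variable {ι E : Type*} [NormedAddCommGroup E] [InnerProductSpace ℝ E]

lemma exists_ne_zero_forall_inner_sub_ne_zero [Nontrivial E] [Finite ι] {c : ι → E}
    (hc : Function.Injective c) : ∃ u ≠ 0, ∀ i j, i ≠ j → ⟪c i - c j, u⟫ ≠ 0 := by
  rcases subsingleton_or_nontrivial ι with _ | _
  · obtain ⟨u, hu⟩ := exists_ne (0 : E)
    exact ⟨u, hu, fun i j hij => absurd (Subsingleton.elim i j) hij⟩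
  obtain ⟨u, hu⟩ := Module.Dual.exists_forall_ne_zero_of_forall_exists
    (fun p : {p : ι × ι // p.1 ≠ p.2} => innerₛₗ ℝ (c p.1.1 - c p.1.2))
    fun p => ⟨c p.1.1 - c p.1.2, inner_self_ne_zero.2 (sub_ne_zero.2 (hc.ne p.2))⟩
  have generic (i j : ι) (hij : i ≠ j) : ⟪c i - c j, u⟫ ≠ 0 := hu ⟨(i, j), hij⟩
  obtain ⟨i, j, hij⟩ := exists_pair_ne ι
  refine ⟨u, fun hu0 => generic i j hij ?_, generic⟩
  rw [hu0, inner_zero_right]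

variable [Fact (finrank ℝ E = 2)] (o : Orientation ℝ E (Fin 2))

lemma exists_eq_smul_of_areaForm_eq_zero {u x : E} (hu : u ≠ 0) (h : o.areaForm u x = 0) :
    ∃ t : ℝ, x = t • u := by
  refine ⟨⟪u, x⟫ / ‖u‖ ^ 2, ext_inner_right ℝ fun y => ?_⟩
  have hxy := o.inner_mul_inner_add_areaForm_mul_areaForm u x y
  rw [h, zero_mul, add_zero] at hxy
  rw [real_inner_smul_left, div_mul_eq_mul_div, hxy,
    mul_div_cancel_left₀ _ (pow_ne_zero 2 (norm_ne_zero_iff.2 hu))]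

variable {s : ι → Sphere E} {u : E}

lemma ncard_extremal_extremePoints_powerCell_le_two [Finite ι] (hu : u ≠ 0) {i : ι}
    (hgeneric : ∀ j ≠ i, ⟪(s j).center - (s i).center, u⟫ ≠ 0) :
    {v ∈ (powerCell s i).extremePoints ℝ | IsMaxOn (o.areaForm u) (powerCell s i) v ∨
      IsMinOn (o.areaForm u) (powerCell s i) v}.ncard ≤ 2 := by
  have eq_zero_of_inner_of_areaForm (j : ι) (hj : j ≠ i) (w : E)
      (hinner : ⟪(s j).center - (s i).center, w⟫ = 0) (harea : o.areaForm u w = 0) : w = 0 := by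
    obtain ⟨t, rfl⟩ := exists_eq_smul_of_areaForm_eq_zero o hu harea
    rw [real_inner_smul_right] at hinner
    rw [(mul_eq_zero.1 hinner).resolve_right (hgeneric j hj), zero_smul]
  have areaForm_ne_zero : o.areaForm u ≠ 0 := fun h => hu <| by
    have hJ := o.areaForm_rightAngleRotation_right u u
    rw [h, LinearMap.zero_apply] at hJ
    exact inner_self_eq_zero.1 hJ.symm
  have unique_max : {v ∈ (powerCell s i).extremePoints ℝ |
      IsMaxOn (o.areaForm u) (powerCell s i) v}.Subsingleton := fun x hx y hy =>
    eq_of_isMaxOn_powerCell areaForm_ne_zero eq_zero_of_inner_of_areaForm hx.1.1 hy.1.1 hx.2 hy.2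
  have unique_min : {v ∈ (powerCell s i).extremePoints ℝ |
      IsMinOn (o.areaForm u) (powerCell s i) v}.Subsingleton := fun x hx y hy =>
    eq_of_isMaxOn_powerCell (ℓ := -o.areaForm u) (neg_ne_zero.2 areaForm_ne_zero)
      (fun j hj w hinner harea => eq_zero_of_inner_of_areaForm j hj w hinner (neg_eq_zero.1 harea))
      hx.1.1 hy.1.1 hx.2.neg hy.2.neg
  calc _ = ({v ∈ (powerCell s i).extremePoints ℝ | IsMaxOn (o.areaForm u) (powerCell s i) v} ∪
        {v ∈ (powerCell s i).extremePoints ℝ | IsMinOn (o.areaForm u) (powerCell s i) v}).ncard :=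
        congrArg ncard sep_or
    _ ≤ 1 + 1 := (ncard_union_le _ _).trans (add_le_add
        ((ncard_le_one unique_max.finite).2 fun _ hx _ hy => unique_max hx hy)
        ((ncard_le_one unique_min.finite).2 fun _ hx _ hy => unique_min hx hy))

lemma ncard_lateral_extremePoints_powerCell_le_two (hu : u ≠ 0)
    (hgeneric : ∀ i j, i ≠ j → ⟪(s i).center - (s j).center, u⟫ ≠ 0) (v : E) :
    {i | v ∈ (powerCell s i).extremePoints ℝ ∧ ¬(IsMaxOn (o.areaForm u) (powerCell s i) v ∨
      IsMinOn (o.areaForm u) (powerCell s i) v)}.ncard ≤ 2 := by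
  set lateral := {i | v ∈ (powerCell s i).extremePoints ℝ ∧
    ¬(IsMaxOn (o.areaForm u) (powerCell s i) v ∨ IsMinOn (o.areaForm u) (powerCell s i) v)}
  have exists_step (i : ι) : ∃ t : ℝ, i ∈ lateral → t ≠ 0 ∧ v + t • u ∈ powerCell s i := by
    by_cases hi : i ∈ lateral
    · obtain ⟨z, hz, hzv, hlevel⟩ := exists_mem_ne_map_eq_of_mem_extremePoints
        (convex_powerCell s i) hi.1 (o.areaForm u) (not_or.1 hi.2).1 (not_or.1 hi.2).2
      obtain ⟨t, ht⟩ := exists_eq_smul_of_areaForm_eq_zero o hu (x := z - v)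
        (by rw [map_sub, hlevel, sub_self])
      refine ⟨t, fun _ => ⟨?_, ?_⟩⟩
      · rintro rfl
        exact hzv (sub_eq_zero.1 (ht.trans (zero_smul ℝ u)))
      · rwa [← ht, add_sub_cancel]
    · exact ⟨0, fun h => absurd h hi⟩
  choose t ht using exists_step
  have side_injOn : InjOn (fun i => decide (0 < t i)) lateral := by
    intro i hi j hj hside
    have same_side : 0 < t i ↔ 0 < t j := decide_eq_decide.1 hside
    refine eq_of_add_smul_mem_powerCell hi.1.1 hj.1.1 (ht i hi).2 (ht j hj).2 ?_ (hgeneric i j)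
    rcases lt_or_gt_of_ne (ht i hi).1 with hneg | hpos
    · exact mul_pos_of_neg_of_neg hneg
        ((not_lt.1 fun h => hneg.not_gt (same_side.2 h)).lt_of_ne (ht j hj).1)
    · exact mul_pos hpos (same_side.1 hpos)
  calc lateral.ncard ≤ (univ : Set Bool).ncard :=
        ncard_le_ncard_of_injOn _ (fun _ _ => mem_univ _) side_injOn
    _ = 2 := by rw [ncard_univ, Nat.card_eq_fintype_card, Fintype.card_bool]

variable (s) in
lemma three_mul_card_corners_le_sum_ncard_extremePoints_powerCell [Fintype ι] :
    3 * (finite_iUnion_extremePoints_powerCell s).toFinset.card ≤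
      ∑ i, ((powerCell s i).extremePoints ℝ).ncard := by
  set V := (finite_iUnion_extremePoints_powerCell s).toFinset
  have mem_V {v : E} : v ∈ V ↔ ∃ i, v ∈ (powerCell s i).extremePoints ℝ := by
    rw [Set.Finite.mem_toFinset, mem_iUnion]
  calc 3 * V.card = ∑ v ∈ V, 3 := by rw [Finset.sum_const, smul_eq_mul, mul_comm]
    _ ≤ ∑ v ∈ V, {i | v ∈ (powerCell s i).extremePoints ℝ}.ncard := by
      refine Finset.sum_le_sum fun v hv => ?_
      obtain ⟨i, hi⟩ := mem_V.1 hv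
      have active_eq : {j | v ∈ (powerCell s j).extremePoints ℝ} = {j | v ∈ powerCell s j} :=
        ext fun j => ⟨fun hj => hj.1, mem_extremePoints_powerCell_of_mem hi⟩
      have hrank := finrank_lt_ncard_of_mem_extremePoints_powerCell hi
      rwa [Fact.out (p := finrank ℝ E = 2), ← active_eq] at hrank
    _ = ∑ i, ((powerCell s i).extremePoints ℝ).ncard :=
      (sum_ncard_eq_sum_ncard V (fun v i => v ∈ (powerCell s i).extremePoints ℝ)
        fun v i hi => mem_V.2 ⟨i, hi⟩).symm

lemma sum_ncard_extremePoints_powerCell_le_two_mul_add [Fintype ι]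
    (hc : Function.Injective fun i => (s i).center) :
    ∑ i, ((powerCell s i).extremePoints ℝ).ncard ≤
      2 * Fintype.card ι + 2 * (finite_iUnion_extremePoints_powerCell s).toFinset.card := by
  have : Nontrivial E := Module.nontrivial_of_finrank_eq_succ (Fact.out : finrank ℝ E = 2)
  have : FiniteDimensional ℝ E := .of_fact_finrank_eq_two
  have o : Orientation ℝ E (Fin 2) := (finBasisOfFinrankEq ℝ E Fact.out).orientation
  obtain ⟨u, hu, hgeneric⟩ := exists_ne_zero_forall_inner_sub_ne_zero hc
  set V := (finite_iUnion_extremePoints_powerCell s).toFinset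
  let Extremal (i : ι) (v : E) : Prop :=
    IsMaxOn (o.areaForm u) (powerCell s i) v ∨ IsMinOn (o.areaForm u) (powerCell s i) v
  calc ∑ i, ((powerCell s i).extremePoints ℝ).ncard
      ≤ ∑ i, ({v ∈ (powerCell s i).extremePoints ℝ | Extremal i v}.ncard +
          {v ∈ (powerCell s i).extremePoints ℝ | ¬Extremal i v}.ncard) :=
        Finset.sum_le_sum fun i _ =>
          (congrArg ncard (inter_union_compl _ {v | Extremal i v}).symm).trans_le
            (ncard_union_le _ _)
    _ ≤ ∑ _i : ι, 2 + ∑ v ∈ V,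
          {i | v ∈ (powerCell s i).extremePoints ℝ ∧ ¬Extremal i v}.ncard := by
        rw [Finset.sum_add_distrib]
        refine add_le_add (Finset.sum_le_sum fun i _ => ?_) (sum_ncard_eq_sum_ncard V
          (fun v i => v ∈ (powerCell s i).extremePoints ℝ ∧ ¬Extremal i v) fun v i hi => ?_).le
        · exact ncard_extremal_extremePoints_powerCell_le_two o hu fun j hj => hgeneric j i hj
        · exact (Set.Finite.mem_toFinset _).2 (mem_iUnion.2 ⟨i, hi.1⟩)
    _ ≤ ∑ _i : ι, 2 + ∑ v ∈ V, 2 := by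
        gcongr with v
        exact ncard_lateral_extremePoints_powerCell_le_two o hu hgeneric v
    _ = 2 * Fintype.card ι + 2 * V.card := by
        simp only [Finset.sum_const, Finset.card_univ, smul_eq_mul, mul_comm]

lemma sum_ncard_extremePoints_powerCell_le [Fintype ι]
    (hc : Function.Injective fun i => (s i).center) :
    ∑ i, ((powerCell s i).extremePoints ℝ).ncard ≤ 6 * Fintype.card ι := by
  have hlower := three_mul_card_corners_le_sum_ncard_extremePoints_powerCell s
  have hupper := sum_ncard_extremePoints_powerCell_le_two_mul_add hc
  lia

end CornerCount

section SideCount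

lemma exists_isGreatest_add_smul_mem {E : Type*} [NormedAddCommGroup E] [NormedSpace ℝ E]
    {K : Set E} (hclosed : IsClosed K) (hbdd : Bornology.IsBounded K) {q w : E} (hq : q ∈ K)
    (hw : w ≠ 0) : ∃ t, IsGreatest {t : ℝ | 0 ≤ t ∧ q + t • w ∈ K} t := by
  set T := {t : ℝ | 0 ≤ t ∧ q + t • w ∈ K}
  have T_nonempty : T.Nonempty := ⟨0, le_rfl, by rwa [zero_smul, add_zero]⟩
  have T_closed : IsClosed T :=
    isClosed_Ici.inter (hclosed.preimage (by fun_prop : Continuous fun t : ℝ => q + t • w))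
  have T_bddAbove : BddAbove T := by
    obtain ⟨C, hC⟩ := (isBounded_iff_subset_closedBall q).1 hbdd
    refine ⟨C / ‖w‖, fun t ht => (le_div_iff₀ (norm_pos_iff.2 hw)).2 ?_⟩
    have hdist := mem_closedBall.1 (hC ht.2)
    rwa [dist_self_add_left, norm_smul, Real.norm_of_nonneg ht.1] at hdist
  exact ⟨sSup T, T_closed.csSup_mem T_nonempty T_bddAbove, fun t ht => le_csSup T_bddAbove ht⟩

variable {ι E : Type*} [NormedAddCommGroup E] [InnerProductSpace ℝ E] {s : ι → Sphere E} {i j : ι}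
  {x : E}

lemma exists_irredundant_determinesPowerCell [Finite ι]
    (hx : ∀ j ≠ i, 0 < powerGap (s i) (s j) x) :
    ∃ F : Finset ι, i ∉ F ∧ DeterminesPowerCell s i F ∧ ∀ j ∈ F, ∃ q ∈ powerCell s i,
      powerGap (s i) (s j) q = 0 ∧ ∀ l ∈ F, l ≠ j → 0 < powerGap (s i) (s l) q := by
  classical
  have := Fintype.ofFinite ι
  obtain ⟨F, ⟨hiF, hF⟩, hmin⟩ :=
    exists_minimal_of_wellFoundedLT (fun F : Finset ι => i ∉ F ∧ DeterminesPowerCell s i F)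
      ⟨_, Finset.notMem_erase _ _, determinesPowerCell_univ_erase⟩
  refine ⟨F, hiF, hF, fun j hj => ?_⟩
  obtain ⟨p, hp, hpi⟩ : ∃ p, (∀ l ∈ F.erase j, 0 ≤ powerGap (s i) (s l) p) ∧
      p ∉ powerCell s i := by
    by_contra! herase
    exact Finset.notMem_erase j F (hmin
      ⟨fun h => hiF (Finset.mem_of_mem_erase h), herase⟩ (Finset.erase_subset j F) hj)
  have hpj : powerGap (s i) (s j) p < 0 := by
    by_contra! hpj
    refine hpi (hF p fun l hl => ?_)
    rcases eq_or_ne l j with rfl | hlj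
    · exact hpj
    · exact hp l (Finset.mem_erase.2 ⟨hlj, hl⟩)
  have hxF (l : ι) (hl : l ∈ F) : 0 < powerGap (s i) (s l) x :=
    hx l (ne_of_mem_of_not_mem hl hiF)
  obtain ⟨a, b, ha, hb, hab, hzero⟩ :
      0 ∈ openSegment ℝ (powerGap (s i) (s j) p) (powerGap (s i) (s j) x) := by
    rw [openSegment_eq_Ioo (hpj.trans (hxF j hj))]
    exact ⟨hpj, hxF j hj⟩
  have hqj : powerGap (s i) (s j) (a • p + b • x) = 0 := (powerGap_combo _ _ _ _ hab).trans hzero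
  have hql (l : ι) (hl : l ∈ F) (hlj : l ≠ j) : 0 < powerGap (s i) (s l) (a • p + b • x) := by
    rw [powerGap_combo _ _ _ _ hab]
    exact add_pos_of_nonneg_of_pos (mul_nonneg ha.le (hp l (Finset.mem_erase.2 ⟨hlj, hl⟩)))
      (mul_pos hb (hxF l hl))
  refine ⟨_, hF _ fun l hl => ?_, hqj, hql⟩
  rcases eq_or_ne l j with rfl | hlj
  · exact hqj.ge
  · exact (hql l hl hlj).le

variable [Fact (finrank ℝ E = 2)] (o : Orientation ℝ E (Fin 2))

lemma powerGap_add_smul_rightAngleRotation (a b : Sphere E) (x d : E) (t : ℝ) :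
    powerGap a b (x + t • o.rightAngleRotation d) =
      powerGap a b x - 2 * t * o.areaForm d (b.center - a.center) := by
  rw [powerGap_add_smul, o.inner_rightAngleRotation_right, o.areaForm_swap, neg_neg]

lemma exists_add_smul_rightAngleRotation_mem_extremePoints_powerCell [Finite ι]
    (hbdd : Bornology.IsBounded (powerCell s i)) (hij : (s j).center ≠ (s i).center) {q : E}
    (hi : q ∈ powerCell s i) (hj : q ∈ powerCell s j) :
    ∃ t : ℝ, 0 ≤ t ∧ q + t • o.rightAngleRotation ((s j).center - (s i).center) ∈
      (powerCell s i).extremePoints ℝ := by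
  set d := (s j).center - (s i).center
  set w := o.rightAngleRotation d with hw
  have hd0 : d ≠ 0 := sub_ne_zero.2 hij
  have hw0 : w ≠ 0 := (map_ne_zero_iff _ o.rightAngleRotation.injective).2 hd0
  obtain ⟨t, ⟨ht, hvi⟩, hlast⟩ :=
    exists_isGreatest_add_smul_mem (isClosed_powerCell s i) hbdd hi hw0
  refine ⟨t, ht, mem_extremePoints_powerCell_iff.2 ⟨hvi, fun u hu => ?_⟩⟩
  obtain ⟨l, hl, hlw⟩ : ∃ l, q + t • w ∈ powerCell s l ∧ 0 < ⟪(s l).center - (s i).center, w⟫ := by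
    by_contra! hfree
    obtain ⟨ε, hmem, hε⟩ :=
      ((eventually_add_smul_mem_powerCell hvi hfree).and self_mem_nhdsWithin).exists
    rw [add_assoc, ← add_smul] at hmem
    have hle := hlast ⟨add_nonneg ht (le_of_lt hε), hmem⟩
    exact (add_le_iff_nonpos_right t).1 hle |>.not_gt hε
  have hvj : q + t • w ∈ powerCell s j := by
    refine mem_powerCell_of_powerGap_eq_zero hvi ?_
    rw [powerGap_add_smul_rightAngleRotation, powerGap_eq_zero hi hj, o.areaForm_apply_self,
      mul_zero, sub_zero]
  obtain ⟨c, rfl⟩ : ∃ c : ℝ, u = c • w := by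
    refine exists_eq_smul_of_areaForm_eq_zero o hw0 ?_
    rw [hw, o.areaForm_rightAngleRotation_left, hu j hvj, neg_zero]
  have hclw := hu l hl
  rw [real_inner_smul_right] at hclw
  rw [(mul_eq_zero.1 hclw).resolve_right hlw.ne', zero_smul]

lemma exists_determinesPowerCell_card_le_ncard_extremePoints [Finite ι]
    (hbdd : Bornology.IsBounded (powerCell s i)) (hx : ∀ j ≠ i, 0 < powerGap (s i) (s j) x) :
    ∃ F : Finset ι, i ∉ F ∧ DeterminesPowerCell s i F ∧
      F.card ≤ ((powerCell s i).extremePoints ℝ).ncard := by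
  have o : Orientation ℝ E (Fin 2) :=
    have : FiniteDimensional ℝ E := .of_fact_finrank_eq_two
    (finBasisOfFinrankEq ℝ E Fact.out).orientation
  obtain ⟨F, hiF, hF, hirr⟩ := exists_irredundant_determinesPowerCell hx
  choose! q hqi hqj hql using hirr
  have hcenter (j : ι) (hj : j ∈ F) : (s j).center ≠ (s i).center := by
    intro heq
    have hinner := two_mul_inner_sub_eq_powerGap_sub (s i) (s j) x (q j)
    rw [heq, sub_self, inner_zero_left, hqj j hj] at hinner
    linarith [hx j (ne_of_mem_of_not_mem hj hiF)]
  have exists_corner (j : ι) (hj : j ∈ F) :=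
    exists_add_smul_rightAngleRotation_mem_extremePoints_powerCell o hbdd (hcenter j hj)
      (hqi j hj) (mem_powerCell_of_powerGap_eq_zero (hqi j hj) (hqj j hj))
  choose! t ht hv using exists_corner
  set v := fun j => q j + t j • o.rightAngleRotation ((s j).center - (s i).center)
  have turn_pos {j l : ι} (hj : j ∈ F) (hl : l ∈ F) (hlj : l ≠ j) (heq : v j = v l) :
      0 < o.areaForm ((s j).center - (s i).center) ((s l).center - (s i).center) := by
    have hgap_j : powerGap (s i) (s l) (v j) = _ :=
      powerGap_add_smul_rightAngleRotation o (s i) (s l) (q j) _ (t j)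
    have hgap_l : powerGap (s i) (s l) (v l) = _ :=
      powerGap_add_smul_rightAngleRotation o (s i) (s l) (q l) _ (t l)
    rw [o.areaForm_apply_self, hqj l hl] at hgap_l
    rw [heq] at hgap_j
    refine pos_of_mul_pos_right (a := 2 * t j) ?_ (mul_nonneg zero_le_two (ht j hj))
    linarith [hql j hj l hl hlj]
  refine ⟨F, hiF, hF, ?_⟩
  rw [← ncard_coe_finset]
  refine ncard_le_ncard_of_injOn v hv (fun j hj l hl heq => ?_)
    ((finite_iUnion_extremePoints_powerCell s).subset (subset_iUnion_of_subset i subset_rfl))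
  by_contra hjl
  have hpos := turn_pos hj hl (Ne.symm hjl) heq
  rw [o.areaForm_swap] at hpos
  exact (neg_pos.1 hpos).not_gt (turn_pos hl hj hjl heq.symm)

end SideCount

section CircumArea

open Real

/-- The area `x * tan (π / x)` of a regular `x`-gon circumscribed about a unit circle, extended to
real values of `x`. -/
noncomputable def circumArea (x : ℝ) : ℝ := x * tan (π / x)

lemma pi_div_mem_Ioo {x : ℝ} (hx : 2 < x) : π / x ∈ Ioo 0 (π / 2) :=
  ⟨by positivity, div_lt_div_of_pos_left pi_pos two_pos hx⟩

lemma cos_pos_of_mem_Ico {y : ℝ} (hy : y ∈ Ico 0 (π / 2)) : 0 < cos y :=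
  cos_pos_of_mem_Ioo ⟨by linarith [pi_pos, hy.1], hy.2⟩

lemma hasDerivAt_circumArea {x : ℝ} (hx : 2 < x) :
    HasDerivAt circumArea (tan (π / x) - π / x / cos (π / x) ^ 2) x := by
  have hx0 : x ≠ 0 := by positivity
  have hcos := cos_pos_of_mem_Ico (Ioo_subset_Ico_self (pi_div_mem_Ioo hx))
  have hquot : HasDerivAt (fun x => π / x) (-π / x ^ 2) x :=
    ((hasDerivAt_inv hx0).const_mul π).congr_deriv (by field_simp)
  refine ((hasDerivAt_id x).mul ((hasDerivAt_tan hcos.ne').comp x hquot)).congr_deriv ?_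
  simp only [id_eq, Function.comp_apply]
  field_simp
  ring

lemma strictAntiOn_tan_sub_div_cos_sq :
    StrictAntiOn (fun y => tan y - y / cos y ^ 2) (Ico 0 (π / 2)) := by
  have hderiv {y : ℝ} (hy : y ∈ Ico 0 (π / 2)) :
      HasDerivAt (fun y => tan y - y / cos y ^ 2) (-(2 * y * sin y / cos y ^ 3)) y := by
    have hcos := (cos_pos_of_mem_Ico hy).ne'
    refine ((hasDerivAt_tan hcos).sub
      ((hasDerivAt_id y).div ((hasDerivAt_cos y).pow 2) (pow_ne_zero 2 hcos))).congr_deriv ?_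
    simp only [id_eq, Pi.pow_apply]
    field_simp
    ring
  refine strictAntiOn_of_deriv_neg (convex_Ico 0 _)
    (fun y hy => (hderiv hy).continuousAt.continuousWithinAt) fun y hy => ?_
  rw [interior_Ico] at hy
  rw [(hderiv (Ioo_subset_Ico_self hy)).deriv, neg_lt_zero]
  have hcos := cos_pos_of_mem_Ico (Ioo_subset_Ico_self hy)
  have hsin := sin_pos_of_pos_of_lt_pi hy.1 (by linarith [hy.2, pi_pos])
  have hy0 := hy.1
  positivity

lemma deriv_circumArea_neg {x : ℝ} (hx : 2 < x) : deriv circumArea x < 0 := by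
  have hy := pi_div_mem_Ioo hx
  rw [(hasDerivAt_circumArea hx).deriv]
  calc _ < tan 0 - 0 / cos 0 ^ 2 := strictAntiOn_tan_sub_div_cos_sq
        ⟨le_rfl, half_pos pi_pos⟩ (Ioo_subset_Ico_self hy) hy.1
    _ = 0 := by rw [tan_zero, zero_div, sub_zero]

lemma strictAntiOn_circumArea : StrictAntiOn circumArea (Ioi 2) := by
  refine strictAntiOn_of_deriv_neg (convex_Ioi 2)
    (fun x hx => (hasDerivAt_circumArea hx).continuousAt.continuousWithinAt) fun x hx => ?_
  rw [interior_Ioi] at hx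
  exact deriv_circumArea_neg hx

lemma convexOn_circumArea : ConvexOn ℝ (Ioi 2) circumArea := by
  refine MonotoneOn.convexOn_of_deriv (convex_Ioi 2)
    (fun x hx => (hasDerivAt_circumArea hx).continuousAt.continuousWithinAt)
    (fun x hx => ?_) fun x hx y hy hxy => ?_
  all_goals rw [interior_Ioi] at *
  · exact (hasDerivAt_circumArea hx).differentiableAt.differentiableWithinAt
  · rw [(hasDerivAt_circumArea hx).deriv, (hasDerivAt_circumArea hy).deriv]
    exact strictAntiOn_tan_sub_div_cos_sq.antitoneOn (Ioo_subset_Ico_self (pi_div_mem_Ioo hy))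
      (Ioo_subset_Ico_self (pi_div_mem_Ioo hx))
      (div_le_div_of_nonneg_left pi_pos.le (zero_lt_two.trans hx) hxy)

lemma circumArea_six : circumArea 6 = √12 := by
  rw [circumArea, tan_pi_div_six, show (12 : ℝ) = 2 ^ 2 * 3 by norm_num, sqrt_mul (by norm_num),
    sqrt_sq zero_le_two, mul_one_div, div_eq_iff (by positivity), mul_assoc,
    mul_self_sqrt zero_le_three]
  norm_num

lemma circumArea_seven_lt_circumArea_six : circumArea 7 < circumArea 6 :=
  strictAntiOn_circumArea (by norm_num [mem_Ioi]) (by norm_num [mem_Ioi]) (by norm_num)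

lemma circumArea_six_lt_circumArea_five : circumArea 6 < circumArea 5 :=
  strictAntiOn_circumArea (by norm_num [mem_Ioi]) (by norm_num [mem_Ioi]) (by norm_num)

lemma exists_le_tangentLine_circumArea {ρ : ℝ} (hρ : |ρ| ≤ 1)
    (hgap : circumArea 6 - circumArea 7 ≤ (circumArea 5 - circumArea 6) * ρ ^ 2) (n : ℕ) :
    ∃ m > 2, circumArea 6 * ρ ^ 2 + (circumArea 6 - circumArea 7) * (6 - n) ≤
      ρ ^ 2 * (circumArea m + (n - m) * deriv circumArea m) := by
  have hρsq : ρ ^ 2 ≤ 1 := (sq_le_one_iff_abs_le_one ρ).2 hρ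
  have two_lt_five : (5 : ℝ) ∈ Ioi 2 := by norm_num [mem_Ioi]
  have two_lt_six : (6 : ℝ) ∈ Ioi 2 := by norm_num [mem_Ioi]
  have two_lt_seven : (7 : ℝ) ∈ Ioi 2 := by norm_num [mem_Ioi]
  rcases lt_trichotomy n 6 with hn | rfl | hn
  · have hn5 : (n : ℝ) ≤ 5 := by exact_mod_cast Nat.le_of_lt_succ hn
    have hslope : deriv circumArea 5 ≤ circumArea 6 - circumArea 5 := by
      have h := convexOn_circumArea.deriv_le_slope two_lt_five two_lt_six (by norm_num)
        (hasDerivAt_circumArea two_lt_five).differentiableAt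
      rw [slope_def_field] at h
      linarith
    refine ⟨5, two_lt_five, ?_⟩
    calc _ ≤ circumArea 6 * ρ ^ 2 + (circumArea 5 - circumArea 6) * ρ ^ 2 * (6 - n) := by
          gcongr
          linarith
      _ = ρ ^ 2 * (circumArea 5 + (n - 5) * (circumArea 6 - circumArea 5)) := by ring
      _ ≤ _ := mul_le_mul_of_nonneg_left (add_le_add_right
          (mul_le_mul_of_nonpos_left hslope (sub_nonpos.2 hn5)) _) (sq_nonneg ρ)
  · refine ⟨6, two_lt_six, le_of_eq ?_⟩
    push_cast
    ring
  · have hn7 : (7 : ℝ) ≤ n := by exact_mod_cast hn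
    have hslope : circumArea 7 - circumArea 6 ≤ deriv circumArea 7 := by
      have h := convexOn_circumArea.slope_le_deriv two_lt_six two_lt_seven (by norm_num)
        (hasDerivAt_circumArea two_lt_seven).differentiableAt
      rw [slope_def_field] at h
      linarith
    refine ⟨7, two_lt_seven, ?_⟩
    have hnonpos : (circumArea 6 - circumArea 7) * (6 - n) ≤ 0 := mul_nonpos_of_nonneg_of_nonpos
      (sub_nonneg.2 circumArea_seven_lt_circumArea_six.le) (by linarith)
    calc _ ≤ circumArea 6 * ρ ^ 2 + ρ ^ 2 * ((circumArea 6 - circumArea 7) * (6 - n)) :=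
          add_le_add_right (le_mul_of_le_one_left hnonpos hρsq) _
      _ = ρ ^ 2 * (circumArea 7 + (n - 7) * (circumArea 7 - circumArea 6)) := by ring
      _ ≤ _ := mul_le_mul_of_nonneg_left (add_le_add_right
          (mul_le_mul_of_nonneg_left hslope (sub_nonneg.2 hn7)) _) (sq_nonneg ρ)

end CircumArea

section PolygonArea

open MeasureTheory Real

lemma integral_two_mul_sqrt_sq_sub_sq {r β : ℝ} (hr : 0 ≤ r) (hβ : β ∈ Icc 0 π) :
    ∫ t in (r * cos β)..r, 2 * √(r ^ 2 - t ^ 2) = r ^ 2 * (β - sin β * cos β) := by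
  have hderiv (θ : ℝ) : HasDerivAt (fun θ => r * cos θ) (r * -sin θ) θ :=
    (hasDerivAt_cos θ).const_mul r
  have hsubst := intervalIntegral.integral_comp_mul_deriv (a := β) (b := 0)
    (g := fun t => 2 * √(r ^ 2 - t ^ 2)) (fun θ _ => hderiv θ)
    (by fun_prop : Continuous fun θ => r * -sin θ).continuousOn (by fun_prop)
  rw [cos_zero, mul_one] at hsubst
  have hintegrand {θ : ℝ} (hθ : θ ∈ uIcc β 0) :
      2 * √(r ^ 2 - (r * cos θ) ^ 2) * (r * -sin θ) = -(2 * r ^ 2) * sin θ ^ 2 := by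
    rw [uIcc_of_ge hβ.1] at hθ
    have hsin : 0 ≤ sin θ := sin_nonneg_of_nonneg_of_le_pi hθ.1 (hθ.2.trans hβ.2)
    rw [show r ^ 2 - (r * cos θ) ^ 2 = (r * sin θ) ^ 2 by
      linear_combination r ^ 2 * cos_sq_add_sin_sq θ - 2 * r ^ 2 * cos_sq_add_sin_sq θ,
      sqrt_sq (mul_nonneg hr hsin)]
    ring
  calc _ = ∫ θ in β..0, -(2 * r ^ 2) * sin θ ^ 2 :=
        hsubst.symm.trans (intervalIntegral.integral_congr fun θ hθ => hintegrand hθ)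
    _ = _ := by
        rw [intervalIntegral.integral_const_mul, integral_sin_sq, sin_zero]
        ring

lemma volumeReal_regionBetween_circularArcs {r β : ℝ} (hr : 0 ≤ r) (hβ : β ∈ Icc 0 π) :
    volume.real (regionBetween (fun t => -√(r ^ 2 - t ^ 2)) (fun t => √(r ^ 2 - t ^ 2))
      (Icc (r * cos β) r)) = r ^ 2 * (β - sin β * cos β) := by
  have hcont : Continuous fun t => √(r ^ 2 - t ^ 2) := by fun_prop
  rw [measureReal_def, Measure.volume_eq_prod, volume_regionBetween_eq_integral
    hcont.fun_neg.integrableOn_Icc hcont.integrableOn_Icc measurableSet_Icc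
    fun _ _ => neg_le_self (sqrt_nonneg _)]
  simp only [Pi.sub_apply, sub_neg_eq_add, ← two_mul]
  rw [ENNReal.toReal_ofReal (integral_nonneg fun t => by positivity), integral_Icc_eq_integral_Ioc,
    ← intervalIntegral.integral_of_le (mul_le_of_le_one_right hr (cos_le_one β)),
    integral_two_mul_sqrt_sq_sub_sq hr hβ]

lemma sq_mul_tangentLine_circumArea_eq {m : ℝ} (hm : 2 < m) (ρ a : ℝ) :
    ρ ^ 2 * (circumArea m + (a - m) * deriv circumArea m) = π * (ρ / cos (π / m)) ^ 2 -
      a * ((ρ / cos (π / m)) ^ 2 * (π / m - sin (π / m) * cos (π / m))) := by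
  have hcos := cos_pos_of_mem_Ico (Ioo_subset_Ico_self (pi_div_mem_Ioo hm))
  rw [(hasDerivAt_circumArea hm).deriv, circumArea, tan_eq_sin_div_cos]
  field_simp
  ring

variable {E : Type*} [NormedAddCommGroup E] [InnerProductSpace ℝ E]

lemma ball_inter_halfSpace_eq_preimage_regionBetween (b : OrthonormalBasis (Fin 2) ℝ E) (c : E)
    {r : ℝ} (hr : 0 ≤ r) (h : ℝ) :
    {x ∈ ball c r | h ≤ ⟪b 0, x - c⟫} = (fun x => (⟪b 0, x - c⟫, ⟪b 1, x - c⟫)) ⁻¹'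
      regionBetween (fun t => -√(r ^ 2 - t ^ 2)) (fun t => √(r ^ 2 - t ^ 2)) (Icc h r) := by
  ext x
  have hnorm : ‖x - c‖ ^ 2 = ⟪b 0, x - c⟫ ^ 2 + ⟪b 1, x - c⟫ ^ 2 := by
    simpa only [Fin.sum_univ_two, norm_eq_abs, sq_abs] using
      (b.sum_sq_norm_inner_right (x - c)).symm
  simp only [mem_ofPred_eq, mem_preimage, regionBetween, mem_Icc, mem_Ioo, ← sq_lt, mem_ball,
    dist_eq_norm, ← sq_lt_sq₀ (norm_nonneg _) hr, hnorm, lt_sub_iff_add_lt']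
  refine ⟨fun ⟨hx, hle⟩ => ⟨⟨hle, ?_⟩, hx⟩, fun ⟨⟨hle, _⟩, hx⟩ => ⟨hx, hle⟩⟩
  exact (abs_le_of_sq_le_sq' (by linarith [sq_nonneg ⟪b 1, x - c⟫]) hr).2

variable [Fact (finrank ℝ E = 2)]

attribute [local instance] FiniteDimensional.of_fact_finrank_eq_two

lemma exists_orthonormalBasis_zero_eq {ν : E} (hν : ‖ν‖ = 1) :
    ∃ b : OrthonormalBasis (Fin 2) ℝ E, b 0 = ν := by
  have hortho : Orthonormal ℝ (({0} : Set (Fin 2)).domRestrict fun _ => ν) :=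
    ⟨fun _ => hν, fun _ _ h => (h (Subsingleton.elim _ _)).elim⟩
  obtain ⟨b, hb⟩ := hortho.exists_orthonormalBasis_extension_of_card_eq (Fact.out : finrank ℝ E = 2)
  exact ⟨b, hb 0 rfl⟩

variable [MeasurableSpace E] [BorelSpace E]

lemma measurePreserving_orthonormalBasis_coords (b : OrthonormalBasis (Fin 2) ℝ E) (c : E) :
    MeasurePreserving fun x => (⟪b 0, x - c⟫, ⟪b 1, x - c⟫) := by
  simp only [← b.repr_apply_apply]
  exact (volume_preserving_finTwoArrow ℝ).comp
    ((PiLp.volume_preserving_ofLp (Fin 2)).comp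
      (b.measurePreserving_repr.comp (measurePreserving_sub_right volume c)))

lemma volumeReal_ball_inter_halfSpace {ν : E} (hν : ‖ν‖ = 1) (c : E) {r β : ℝ} (hr : 0 ≤ r)
    (hβ : β ∈ Icc 0 π) :
    volume.real {x ∈ ball c r | r * cos β ≤ ⟪ν, x - c⟫} = r ^ 2 * (β - sin β * cos β) := by
  obtain ⟨b, rfl⟩ := exists_orthonormalBasis_zero_eq hν
  have hcont : Continuous fun t => √(r ^ 2 - t ^ 2) := by fun_prop
  rw [ball_inter_halfSpace_eq_preimage_regionBetween b c hr,
    (measurePreserving_orthonormalBasis_coords b c).measureReal_preimage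
      (measurableSet_regionBetween hcont.fun_neg.measurable hcont.measurable
        measurableSet_Icc).nullMeasurableSet, volumeReal_regionBetween_circularArcs hr hβ]

lemma volumeReal_ball_eq_pi_mul_sq (c : E) {r : ℝ} (hr : 0 ≤ r) :
    volume.real (ball c r) = π * r ^ 2 := by
  have hrank : finrank ℝ E = 2 := Fact.out
  have : Nontrivial E := nontrivial_of_finrank_eq_succ hrank
  rw [measureReal_def, InnerProductSpace.volume_ball_of_dim_even (k := 1) hrank, hrank, pow_one,
    Nat.factorial_one, Nat.cast_one, div_one, ENNReal.toReal_mul, ENNReal.toReal_pow,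
    ENNReal.toReal_ofReal hr, ENNReal.toReal_ofReal pi_pos.le, mul_comm]

-- The ball of radius `ρ / cos (π / m)` overhangs every side of the polygon by at most a circular
-- segment of angle `2 * π / m`; for the regular `m`-gon it is the circumscribed ball.
lemma sq_mul_tangentLine_circumArea_le_volumeReal {κ : Type*} {F : Finset κ} {ν : κ → E}
    (hν : ∀ j ∈ F, ‖ν j‖ = 1) {c : E} {ρ : ℝ} (hρ : 0 ≤ ρ) {K : Set E} (hK : volume K ≠ ⊤)
    (hsub : ∀ x, (∀ j ∈ F, ⟪ν j, x - c⟫ ≤ ρ) → x ∈ K) {m : ℝ} (hm : 2 < m) :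
    ρ ^ 2 * (circumArea m + (F.card - m) * deriv circumArea m) ≤ volume.real K := by
  have hβ := pi_div_mem_Ioo hm
  have hcos := cos_pos_of_mem_Ico (Ioo_subset_Ico_self hβ)
  have hβπ : π / m ∈ Icc 0 π := ⟨hβ.1.le, by linarith [hβ.2, pi_pos]⟩
  set R := ρ / cos (π / m)
  have hR : 0 ≤ R := by positivity
  let segment (j : κ) : Set E := {x ∈ ball c R | R * cos (π / m) ≤ ⟪ν j, x - c⟫}
  have hcover : ball c R ⊆ K ∪ ⋃ j ∈ F, segment j := by
    intro x hx
    refine or_iff_not_imp_left.2 fun hxK => ?_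
    obtain ⟨j, hj, hlt⟩ : ∃ j ∈ F, ρ < ⟪ν j, x - c⟫ := by
      by_contra! hle
      exact hxK (hsub x hle)
    exact mem_biUnion hj ⟨hx, (div_mul_cancel₀ ρ hcos.ne').trans_le hlt.le⟩
  have hfin : volume (K ∪ ⋃ j ∈ F, segment j) ≠ ⊤ :=
    measure_union_ne_top hK (measure_ne_top_of_subset
      (iUnion₂_subset fun j _ => sep_subset _ _) (measure_ball_lt_top (x := c) (r := R)).ne)
  rw [sq_mul_tangentLine_circumArea_eq hm, sub_le_iff_le_add]
  calc _ = volume.real (ball c R) := (volumeReal_ball_eq_pi_mul_sq c hR).symm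
    _ ≤ volume.real (K ∪ ⋃ j ∈ F, segment j) := measureReal_mono hcover hfin
    _ ≤ volume.real K + ∑ j ∈ F, volume.real (segment j) :=
      (measureReal_union_le _ _).trans (add_le_add_right (measureReal_biUnion_finset_le _ _) _)
    _ = _ := by
      rw [Finset.sum_congr rfl fun j hj => volumeReal_ball_inter_halfSpace (hν j hj) c hR hβπ,
        Finset.sum_const, nsmul_eq_mul]

variable {ι : Type*} [Finite ι] {s : ι → Sphere E} {i : ι}

lemma sq_mul_tangentLine_circumArea_le_volumeReal_powerCell {c : E} {ρ : ℝ} (hρ : 0 < ρ)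
    (hball : closedBall c ρ ⊆ powerCell s i) (hbdd : Bornology.IsBounded (powerCell s i))
    (hcenter : ∀ j ≠ i, (s j).center ≠ (s i).center) {m : ℝ} (hm : 2 < m) :
    ρ ^ 2 * (circumArea m + (((powerCell s i).extremePoints ℝ).ncard - m) * deriv circumArea m) ≤
      volume.real (powerCell s i) := by
  have hgap := two_mul_norm_le_powerGap_of_closedBall_subset hρ.le hball
  have hnorm {j : ι} (hj : j ≠ i) : 0 < ‖(s j).center - (s i).center‖ :=
    norm_pos_iff.2 (sub_ne_zero.2 (hcenter j hj))
  obtain ⟨F, hiF, hF, hcard⟩ := exists_determinesPowerCell_card_le_ncard_extremePoints hbdd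
    fun j hj => (by have := hnorm hj; positivity : (0 : ℝ) < _).trans_le (hgap j)
  have hne {j : ι} (hj : j ∈ F) : j ≠ i := ne_of_mem_of_not_mem hj hiF
  let ν (j : ι) : E := ‖(s j).center - (s i).center‖⁻¹ • ((s j).center - (s i).center)
  have hsub (x : E) (hx : ∀ j ∈ F, ⟪ν j, x - c⟫ ≤ ρ) : x ∈ powerCell s i := by
    refine hF x fun j hj => ?_
    have hinner := hx j hj
    rw [real_inner_smul_left, inv_mul_le_iff₀ (hnorm (hne hj))] at hinner
    linarith [hgap j, two_mul_inner_sub_eq_powerGap_sub (s i) (s j) c x]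
  calc _ ≤ ρ ^ 2 * (circumArea m + (F.card - m) * deriv circumArea m) := by
        gcongr ρ ^ 2 * (circumArea m + ?_)
        refine mul_le_mul_of_nonpos_right (sub_le_sub_right ?_ m) (deriv_circumArea_neg hm).le
        exact_mod_cast hcard
    _ ≤ _ := sq_mul_tangentLine_circumArea_le_volumeReal
        (fun j hj => norm_smul_inv_norm (𝕜 := ℝ) (sub_ne_zero.2 (hcenter j (hne hj)))) hρ.le
        hbdd.measure_lt_top.ne hsub hm

end PolygonArea

section PackedCells

open MeasureTheory

variable {ι E : Type*} [NormedAddCommGroup E] [InnerProductSpace ℝ E]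
  [Fact (finrank ℝ E = 2)] [MeasurableSpace E] [BorelSpace E] {s : ι → Sphere E}

attribute [local instance] FiniteDimensional.of_fact_finrank_eq_two

lemma aedisjoint_powerCell {i j : ι} (hij : (s i).center ≠ (s j).center) :
    AEDisjoint volume (powerCell s i) (powerCell s j) := by
  rcases (powerCell s i ∩ powerCell s j).eq_empty_or_nonempty with hempty | ⟨p, hpi, hpj⟩
  · exact (disjoint_iff_inter_eq_empty.2 hempty).aedisjoint
  let ℓ : E →ₗ[ℝ] ℝ := innerₛₗ ℝ ((s j).center - (s i).center)
  have subset_hyperplane :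
      powerCell s i ∩ powerCell s j ⊆ AffineSubspace.mk' p (LinearMap.ker ℓ) := by
    rintro x ⟨hxi, hxj⟩
    have hinner := two_mul_inner_sub_eq_powerGap_sub (s i) (s j) p x
    rw [powerGap_eq_zero hpi hpj, powerGap_eq_zero hxi hxj, sub_zero] at hinner
    exact AffineSubspace.mem_mk'.2 ((mul_eq_zero_iff_left two_ne_zero).1 hinner)
  refine measure_mono_null subset_hyperplane (Measure.addHaar_affineSubspace _ _ fun htop => ?_)
  have hker : LinearMap.ker ℓ = ⊤ := by
    rw [← AffineSubspace.direction_mk' p (LinearMap.ker ℓ), htop, AffineSubspace.direction_top]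
  have hself : ℓ ((s j).center - (s i).center) = 0 := by
    rw [LinearMap.ker_eq_top.1 hker, LinearMap.zero_apply]
  exact hij (sub_eq_zero.1 (inner_self_eq_zero.1 hself)).symm

lemma sum_volumeReal_powerCell_le [Finite ι] (hc : Function.Injective fun i => (s i).center)
    {S : Finset ι} {K : Set E} (hK : Bornology.IsBounded K) (hcell : ∀ i ∈ S, powerCell s i ⊆ K) :
    ∑ i ∈ S, volume.real (powerCell s i) ≤ volume.real K := by
  rw [← measureReal_biUnion_finset₀
    (fun i _ j _ hij => aedisjoint_powerCell (hc.ne hij))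
    (fun i _ => (isClosed_powerCell s i).nullMeasurableSet)
    (fun i hi => (hK.subset (hcell i hi)).measure_lt_top.ne)]
  exact measureReal_mono (iUnion₂_subset hcell) hK.measure_lt_top.ne

lemma circumArea_six_mul_sum_radius_sq_le [Fintype ι]
    (hc : Function.Injective fun i => (s i).center) {S : Finset ι} {K : Set E}
    (hK : Bornology.IsBounded K) (hcell : ∀ i ∈ S, powerCell s i ⊆ K)
    (hball : ∀ i ∈ S, closedBall (s i).center (s i).radius ⊆ powerCell s i)
    {r : ℝ} (hr : 0 < r) (hradius : ∀ i ∈ S, (s i).radius ∈ Icc r 1)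
    (hgap : circumArea 6 - circumArea 7 ≤ (circumArea 5 - circumArea 6) * r ^ 2) :
    circumArea 6 * ∑ i ∈ S, (s i).radius ^ 2 ≤
      volume.real K + 6 * (circumArea 6 - circumArea 7) * (Fintype.card ι - S.card) := by
  set corners : ι → ℝ := fun i => ((powerCell s i).extremePoints ℝ).ncard
  set gap := circumArea 6 - circumArea 7
  have cell_bound (i) (hi : i ∈ S) :
      circumArea 6 * (s i).radius ^ 2 + gap * (6 - corners i) ≤ volume.real (powerCell s i) := by
    obtain ⟨hr_le, hle_one⟩ := hradius i hi
    have hpos : 0 < (s i).radius := hr.trans_le hr_le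
    have hgap' : gap ≤ (circumArea 5 - circumArea 6) * (s i).radius ^ 2 :=
      hgap.trans (by have := circumArea_six_lt_circumArea_five; gcongr)
    obtain ⟨m, hm, htangent⟩ := exists_le_tangentLine_circumArea
      (abs_le.2 ⟨by linarith, hle_one⟩) hgap' ((powerCell s i).extremePoints ℝ).ncard
    exact htangent.trans (sq_mul_tangentLine_circumArea_le_volumeReal_powerCell hpos (hball i hi)
      (hK.subset (hcell i hi)) (fun j hj => hc.ne hj) hm)
  have sum_corners_le : ∑ i ∈ S, corners i ≤ 6 * Fintype.card ι := by
    refine (Finset.sum_le_univ_sum_of_nonneg fun i => Nat.cast_nonneg _).trans ?_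
    exact_mod_cast sum_ncard_extremePoints_powerCell_le hc
  have hsum := (Finset.sum_le_sum cell_bound).trans (sum_volumeReal_powerCell_le hc hK hcell)
  rw [Finset.sum_add_distrib, ← Finset.mul_sum, ← Finset.mul_sum, Finset.sum_sub_distrib,
    Finset.sum_const, nsmul_eq_mul] at hsum
  have hgap_nonneg : 0 ≤ gap := sub_nonneg.2 circumArea_seven_lt_circumArea_six.le
  linarith [mul_le_mul_of_nonneg_left sum_corners_le hgap_nonneg]

end PackedCells

section Square

open MeasureTheory

lemma mem_square_iff {R : ℝ} {x : Plane} : x ∈ square R ↔ ∀ k, |x k| ≤ R := by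
  rw [Fin.forall_fin_two]
  rfl

lemma mem_square_iff_units {R : ℝ} {x : Plane} :
    x ∈ square R ↔ ∀ p : Fin 2 × ℤˣ, p.2 * x p.1 ≤ R := by
  rw [mem_square_iff, Prod.forall]
  refine forall_congr' fun k => ⟨fun h ε => ?_, fun h => abs_le'.2 ⟨?_, ?_⟩⟩
  · rcases Int.units_eq_one_or ε with rfl | rfl
    · simpa using (abs_le'.1 h).1
    · simpa using (abs_le'.1 h).2
  · simpa using h 1
  · simpa using h (-1)

lemma square_eq_preimage_Icc (R : ℝ) :
    square R = WithLp.ofLp ⁻¹' Icc (fun _ : Fin 2 => -R) (fun _ => R) := by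
  ext x
  simp only [mem_square_iff, abs_le, mem_preimage, mem_Icc, Pi.le_def, ← forall_and]

lemma isBounded_square (R : ℝ) : Bornology.IsBounded (square R) := by
  rw [square_eq_preimage_Icc]
  exact (PiLp.antilipschitzWith_ofLp 2 fun _ : Fin 2 => ℝ).isBounded_preimage (isBounded_Icc _ _)

lemma volumeReal_square {R : ℝ} (hR : 0 ≤ R) : volume.real (square R) = (2 * R) ^ 2 := by
  rw [square_eq_preimage_Icc, (PiLp.volume_preserving_ofLp (Fin 2)).measureReal_preimage
    measurableSet_Icc.nullMeasurableSet, Measure.real,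
    Real.volume_Icc_pi_toReal fun _ => neg_le_self hR, Fin.prod_univ_two]
  ring

lemma inner_le_of_mem_square {R M : ℝ} {c x : Plane} (hc : c ∈ square R) (hx : x ∈ square M) :
    ⟪c, x⟫ ≤ 2 * (R * M) := by
  rw [mem_square_iff] at hc hx
  rw [PiLp.inner_apply, Fin.sum_univ_two, two_mul]
  have coord_le (k : Fin 2) : ⟪c k, x k⟫ ≤ R * M :=
    (real_inner_le_norm _ _).trans
      (mul_le_mul (hc k) (hx k) (abs_nonneg _) ((abs_nonneg _).trans (hc k)))
  exact add_le_add (coord_le 0) (coord_le 1)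

lemma mem_square_of_dist_le {R ε : ℝ} {x y : Plane} (hx : x ∈ square R) (hxy : dist y x ≤ ε) :
    y ∈ square (R + ε) := by
  rw [mem_square_iff] at *
  intro k
  have hcoord : |y k - x k| ≤ ε :=
    (PiLp.norm_apply_le (y - x) k).trans ((dist_eq_norm y x).symm.trans_le hxy)
  linarith [abs_sub_abs_le_abs_sub (y k) (x k), hx k]

end Square

section GuardSphere

/-- Four large spheres, each touching one side of `square R` from outside. Their cells enclose
those of the disks packed in the square; the size `2 * R * (R + 1) + 1` is what keeps the latter
cells within distance `1` of the square. -/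
noncomputable def guardSphere (R : ℝ) (p : Fin 2 × ℤˣ) : Sphere Plane where
  center := EuclideanSpace.single p.1 (p.2 * (2 * R * (R + 1) + 1))
  radius := 2 * R * (R + 1) + 1 - R

variable {R : ℝ} {p : Fin 2 × ℤˣ} {x : Plane}

lemma guardSphere_power : (guardSphere R p).power x =
    ‖x‖ ^ 2 - R ^ 2 + 2 * (2 * R * (R + 1) + 1) * (R - p.2 * x p.1) := by
  have sign_sq : ((p.2 : ℤ) : ℝ) ^ 2 = 1 := by
    rcases Int.units_eq_one_or p.2 with h | h <;> simp [h]
  simp only [guardSphere, Sphere.power, dist_eq_norm, norm_sub_sq_real,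
    EuclideanSpace.inner_single_right, PiLp.norm_single, Real.norm_eq_abs, sq_abs,
    conj_trivial, mul_pow, sign_sq]
  ring

lemma guardSphere_radius_pos (hR : 0 ≤ R) : 0 < (guardSphere R p).radius := by
  simp only [guardSphere]
  nlinarith

lemma guardSphere_power_nonneg (hR : 0 ≤ R) (hx : x ∈ square R) :
    0 ≤ (guardSphere R p).power x := by
  have hside : p.2 * x p.1 ≤ R := mem_square_iff_units.1 hx p
  have hcoord : (p.2 * x p.1) ^ 2 ≤ ‖x‖ ^ 2 := by
    refine sq_le_sq.2 ?_
    have := PiLp.norm_apply_le x p.1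
    rcases Int.units_eq_one_or p.2 with h | h <;> simpa [h] using this
  rw [guardSphere_power]
  nlinarith [mul_nonneg (sub_nonneg.2 hside) (sub_nonneg.2 hside),
    mul_nonneg (sub_nonneg.2 hside) (mul_nonneg hR hR), mul_nonneg (sub_nonneg.2 hside) hR]

lemma guardSphere_center_injective (hR : 0 ≤ R) :
    Function.Injective fun p => (guardSphere R p).center := by
  have hL : 0 < 2 * R * (R + 1) + 1 := by positivity
  rintro ⟨k, ε⟩ ⟨l, δ⟩ h
  have hk := congr_arg (fun v : Plane => v k) h
  simp only [guardSphere, PiLp.single_apply] at hk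
  by_cases hkl : k = l
  · have hεδ : (ε : ℤ) = δ := by simpa [hkl, hL.ne'] using hk
    rw [hkl, Units.ext hεδ]
  · simp [hkl, hL.ne'] at hk

lemma mem_square_of_power_le_guardSphere {a : Sphere Plane} (hR : 0 ≤ R) (hc : a.center ∈ square R)
    (hradius : |a.radius| ≤ 1) (hx : ∀ p, a.power x ≤ (guardSphere R p).power x) :
    x ∈ square (R + 1) := by
  obtain ⟨p, hp⟩ := Finite.exists_max fun p : Fin 2 × ℤˣ => p.2 * x p.1
  set M := p.2 * x p.1
  have hinner := inner_le_of_mem_square hc (mem_square_iff_units.2 hp)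
  have hpower := hx p
  rw [guardSphere_power, Sphere.power, dist_comm, dist_eq_norm, norm_sub_sq_real] at hpower
  have hradius_sq : a.radius ^ 2 ≤ 1 := (sq_le_one_iff_abs_le_one _).2 hradius
  refine mem_square_iff_units.2 fun q => (hp q).trans ?_
  change M ≤ R + 1
  by_contra! hlt
  nlinarith [sq_nonneg ‖a.center‖, mul_nonneg (mul_nonneg hR hR) (sub_nonneg.2 hlt.le)]

end GuardSphere

section PackedSquare

open MeasureTheory

instance fact_finrank_plane : Fact (finrank ℝ Plane = 2) := ⟨finrank_euclideanSpace_fin⟩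

/-- The boundary sphere of a disk. -/
def Disk.toSphere (d : Disk) : Sphere Plane := ⟨d.center, d.radius⟩

/-- The spheres bounding the disks of `S`, together with the four guards of `square R`. -/
noncomputable def guardedSpheres (S : Finset Disk) (R : ℝ) : S ⊕ Fin 2 × ℤˣ → Sphere Plane :=
  Sum.elim (fun d => d.1.toSphere) (guardSphere R)

variable {P : Set Disk} {S : Finset Disk} {R r : ℝ} {d d' : Disk} {x : Plane}

lemma IsPacking.power_nonneg (hP : IsPacking P) (hd : d ∈ P) (hd' : d' ∈ P) (hne : d ≠ d')
    (hx : x ∈ d.set) : 0 ≤ d'.toSphere.power x := by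
  have hdisj := hP d hd d' hd' hne
  rw [Disk.set, Disk.set, interior_closedBall _ d.radius_pos.ne',
    interior_closedBall _ d'.radius_pos.ne', disjoint_ball_ball_iff d.radius_pos d'.radius_pos]
    at hdisj
  refine (Sphere.power_nonneg_iff_radius_le_dist_center d'.radius_pos.le).2 ?_
  change d'.radius ≤ dist x d'.center
  linarith [dist_triangle_left d.center d'.center x, mem_closedBall.1 hx]

lemma guardedSpheres_radius_pos (hR : 0 ≤ R) (i : S ⊕ Fin 2 × ℤˣ) :
    0 < (guardedSpheres S R i).radius := by
  rcases i with d | p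
  · exact d.1.radius_pos
  · exact guardSphere_radius_pos hR

lemma guardedSpheres_power_nonneg (hP : IsPacking P) (hS : ↑S ⊆ {d ∈ P | d.set ⊆ square R})
    (hR : 0 ≤ R) {d : S} {i : S ⊕ Fin 2 × ℤˣ} (hi : i ≠ Sum.inl d) (hx : x ∈ d.1.set) :
    0 ≤ (guardedSpheres S R i).power x := by
  rcases i with d' | p
  · exact hP.power_nonneg (hS d.2).1 (hS d'.2).1 (fun h => hi (by rw [Subtype.ext h])) hx
  · exact guardSphere_power_nonneg hR ((hS d.2).2 hx)

lemma guardedSpheres_center_injective (hP : IsPacking P)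
    (hS : ↑S ⊆ {d ∈ P | d.set ⊆ square R}) (hR : 0 ≤ R) :
    Function.Injective fun i => (guardedSpheres S R i).center := by
  have center_ne {d : S} {i : S ⊕ Fin 2 × ℤˣ} (hi : i ≠ Sum.inl d) :
      (guardedSpheres S R (Sum.inl d)).center ≠ (guardedSpheres S R i).center :=
    center_ne_center_of_power_nonneg (guardedSpheres_radius_pos hR _)
      (guardedSpheres_radius_pos hR _) fun _ hx => guardedSpheres_power_nonneg hP hS hR hi hx
  rintro (d | p) i h
  · by_contra hne
    exact center_ne (Ne.symm hne) h
  · rcases i with d | q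
    · exact absurd h.symm (center_ne Sum.inr_ne_inl)
    · exact congr_arg Sum.inr (guardSphere_center_injective hR h)

lemma circumArea_six_mul_sum_radius_sq_le_of_isPacking (hP : IsPacking P)
    (hS : ↑S ⊆ {d ∈ P | d.set ⊆ square R}) (hR : 0 ≤ R) (hr : 0 < r)
    (hradii : ∀ d ∈ P, d.radius ∈ Icc r 1)
    (hgap : circumArea 6 - circumArea 7 ≤ (circumArea 5 - circumArea 6) * r ^ 2) :
    circumArea 6 * ∑ d ∈ S, d.radius ^ 2 ≤
      (2 * (R + 1)) ^ 2 + 24 * (circumArea 6 - circumArea 7) := by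
  have hradii' (d : S) : d.1.radius ∈ Icc r 1 := hradii d (hS d.2).1
  have hcell (d : S) : powerCell (guardedSpheres S R) (Sum.inl d) ⊆ square (R + 1) := fun x hx =>
    mem_square_of_power_le_guardSphere hR ((hS d.2).2 (mem_closedBall_self d.1.radius_pos.le))
      ((abs_of_pos d.1.radius_pos).trans_le (hradii' d).2) fun p => hx (Sum.inr p)
  have hball (d : S) : closedBall (guardedSpheres S R (Sum.inl d)).center
      (guardedSpheres S R (Sum.inl d)).radius ⊆ powerCell (guardedSpheres S R) (Sum.inl d) :=
    closedBall_subset_powerCell fun i hi _ hx =>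
      guardedSpheres_power_nonneg hP hS hR hi hx
  have hmain := circumArea_six_mul_sum_radius_sq_le (guardedSpheres_center_injective hP hS hR)
    (S := Finset.univ.map .inl) (isBounded_square (R + 1))
    (Finset.forall_mem_map.2 fun d _ => hcell d) (Finset.forall_mem_map.2 fun d _ => hball d)
    hr (Finset.forall_mem_map.2 fun d _ => hradii' d) hgap
  rw [Finset.sum_map, volumeReal_square (by positivity)] at hmain
  refine (hmain.trans_eq' ?_).trans_eq ?_
  · exact congr_arg _ (Finset.sum_coe_sort S fun d => d.radius ^ 2)
  · rw [Finset.card_map, Finset.card_univ, Fintype.card_sum, Fintype.card_prod,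
      Fintype.card_units_int, Fintype.card_fin]
    push_cast
    ring

end PackedSquare

section Density

open MeasureTheory Real

variable {P : Set Disk} {R r : ℝ}

lemma finite_setOf_subset_square (hP : IsPacking P) (hR : 0 ≤ R) (hr : 0 < r)
    (hradii : ∀ d ∈ P, d.radius ∈ Icc r 1)
    (hgap : circumArea 6 - circumArea 7 ≤ (circumArea 5 - circumArea 6) * r ^ 2) :
    {d ∈ P | d.set ⊆ square R}.Finite := by
  by_contra hinf
  have hpos : 0 < circumArea 6 := by rw [circumArea_six]; positivity
  set bound := (2 * (R + 1)) ^ 2 + 24 * (circumArea 6 - circumArea 7)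
  obtain ⟨N, hN⟩ := exists_nat_gt (bound / (circumArea 6 * r ^ 2))
  obtain ⟨S, hS, rfl⟩ := Set.Infinite.exists_subset_card_eq hinf N
  have card_mul_le : S.card * r ^ 2 ≤ ∑ d ∈ S, d.radius ^ 2 := by
    rw [← nsmul_eq_mul]
    refine Finset.card_nsmul_le_sum _ _ _ fun d hd => ?_
    have := (hradii d (hS hd).1).1
    gcongr
  have hsum := circumArea_six_mul_sum_radius_sq_le_of_isPacking hP hS hR hr hradii hgap
  rw [div_lt_iff₀ (by positivity)] at hN
  nlinarith [mul_le_mul_of_nonneg_left card_mul_le hpos.le]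

lemma packingUnion_inter_square_subset (hradii : ∀ d ∈ P, d.radius ≤ 1) :
    packingUnion P ∩ square R ⊆ ⋃ d ∈ {d ∈ P | d.set ⊆ square (R + 2)}, d.set := by
  rintro x ⟨hx, hxR⟩
  obtain ⟨d, hd, hxd⟩ := mem_iUnion₂.1 hx
  refine mem_iUnion₂.2 ⟨d, ⟨hd, fun y hy => mem_square_of_dist_le hxR ?_⟩, hxd⟩
  linarith [dist_triangle_right y x d.center, mem_closedBall.1 hxd, mem_closedBall.1 hy,
    hradii d hd]

lemma volumeReal_packingUnion_inter_square_le (hP : IsPacking P) (hR : 0 ≤ R) (hr : 0 < r)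
    (hradii : ∀ d ∈ P, d.radius ∈ Icc r 1)
    (hgap : circumArea 6 - circumArea 7 ≤ (circumArea 5 - circumArea 6) * r ^ 2) :
    volume.real (packingUnion P ∩ square R) ≤
      π / √12 * ((2 * (R + 3)) ^ 2 + 24 * (circumArea 6 - circumArea 7)) := by
  have hR' : 0 ≤ R + 2 := by positivity
  obtain ⟨S, hS⟩ := (finite_setOf_subset_square hP hR' hr hradii hgap).exists_finset_coe
  have hcover : packingUnion P ∩ square R ⊆ ⋃ d ∈ S, d.set := by
    have := packingUnion_inter_square_subset (R := R) fun d hd => (hradii d hd).2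
    rwa [← hS] at this
  have hsum := circumArea_six_mul_sum_radius_sq_le_of_isPacking hP hS.subset hR' hr hradii hgap
  rw [circumArea_six] at hsum
  calc volume.real (packingUnion P ∩ square R)
      ≤ volume.real (⋃ d ∈ S, d.set) :=
        measureReal_mono hcover ((measure_biUnion_lt_top S.finite_toSet
          fun d _ => isBounded_closedBall.measure_lt_top).ne)
    _ ≤ ∑ d ∈ S, volume.real d.set := measureReal_biUnion_finset_le _ _
    _ = ∑ d ∈ S, π * d.radius ^ 2 := by
        refine Finset.sum_congr rfl fun d _ => ?_
        rw [Disk.set, Measure.addHaar_real_closedBall_eq_addHaar_real_ball,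
          volumeReal_ball_eq_pi_mul_sq _ d.radius_pos.le]
    _ = π / √12 * (√12 * ∑ d ∈ S, d.radius ^ 2) := by
        rw [← Finset.mul_sum]
        field_simp
    _ ≤ _ := by
        rw [circumArea_six]
        gcongr
        linarith

lemma tendsto_two_mul_add_sq_add_div (a b : ℝ) :
    Filter.Tendsto (fun R : ℝ => ((2 * (R + a)) ^ 2 + b) / (4 * R ^ 2)) Filter.atTop (𝓝 1) := by
  have hlim : Filter.Tendsto (fun y : ℝ => (1 + a * y) ^ 2 + b / 4 * y ^ 2) (𝓝 0) (𝓝 1) :=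
    Continuous.tendsto' (by fun_prop) _ _ (by ring)
  refine (hlim.comp tendsto_inv_atTop_zero).congr' ?_
  filter_upwards [Filter.eventually_ne_atTop 0] with R hR
  simp only [Function.comp_apply]
  field_simp
  ring

lemma density_le_pi_div_sqrt_twelve (hP : IsPacking P) (hr : 0 < r)
    (hradii : ∀ d ∈ P, d.radius ∈ Icc r 1)
    (hgap : circumArea 6 - circumArea 7 ≤ (circumArea 5 - circumArea 6) * r ^ 2) :
    density P ≤ π / √12 := by
  have hbound : ∀ᶠ R in Filter.atTop, volume.real (packingUnion P ∩ square R) / (4 * R ^ 2) ≤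
      π / √12 * (((2 * (R + 3)) ^ 2 + 24 * (circumArea 6 - circumArea 7)) / (4 * R ^ 2)) := by
    filter_upwards [Filter.eventually_ge_atTop 0] with R hR
    rw [← mul_div_assoc]
    gcongr
    exact volumeReal_packingUnion_inter_square_le hP hR hr hradii hgap
  have hlim := (tendsto_two_mul_add_sq_add_div 3
    (24 * (circumArea 6 - circumArea 7))).const_mul (π / √12)
  rw [mul_one] at hlim
  rw [← hlim.limsup_eq]
  exact Filter.limsup_le_limsup hbound
    (.of_frequently_ge (a := 0) (Filter.Frequently.of_forall fun R => by positivity))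
    hlim.isBoundedUnder_le

end Density

/-- Blind bound: a packing with all radii in `[r, 1]` which is denser
than the hexagonal compact packing satisfies
`r ≤ √((7 tan(π/7) − 6 tan(π/6))/(6 tan(π/6) − 5 tan(π/5)))`. -/
theorem blind_uniformity_bound (r : ℝ) (h0 : 0 < r) (h1 : r ≤ 1)
    (P : Set Disk) (hP : IsPacking P)
    (hradii : ∀ d ∈ P, d.radius ∈ Set.Icc r 1)
    (hdense : Real.pi / Real.sqrt 12 < density P) :
    r ≤ Real.sqrt ((7 * Real.tan (Real.pi / 7) - 6 * Real.tan (Real.pi / 6)) /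
          (6 * Real.tan (Real.pi / 6) - 5 * Real.tan (Real.pi / 5))) := by
  change r ≤ √((circumArea 7 - circumArea 6) / (circumArea 6 - circumArea 5))
  by_contra! hlt
  have hgap := (Real.sqrt_lt' h0).1 hlt
  rw [← neg_div_neg_eq, neg_sub, neg_sub,
    div_lt_iff₀' (sub_pos.2 circumArea_six_lt_circumArea_five)] at hgap
  exact hdense.not_ge (density_le_pi_div_sqrt_twelve hP h0 hradii hgap.le)
end
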